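/- arXiv:2510.15807 — 2 statements merged into one kernel-verified Lean document; each statement's English description precedes it below -/
import Mathlib

section
/- For all integers n ≥ 1 and k ≥ 0 the moments of the normalized volume satisfy the recurrence E[V_n^k] = (2n/((n+k)(n+k+1))) · Σ_{ℓ=0}^{k} Σ_{m=0}^{n−1} (C(n−1,m)·C(k,ℓ)/C(n+k,m+ℓ)) · E[V_m^ℓ], where by convention E[V_0^0] = 1 and E[V_0^ℓ] = 0 for ℓ ≥ 1. -/
open MeasureTheory

noncomputable section

/-- The triangle with vertices (0,0), (1,0), (0,1). -/
def T : Set (ℝ × ℝ) := convexHull ℝ {(0, 0), (1, 0), (0, 1)}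

/-- The uniform distribution on `T`: twice Lebesgue measure restricted to `T`. -/
def μT : Measure (ℝ × ℝ) := (2 : ENNReal) • (volume.restrict T)

/-- Joint law of `n` independent uniform points in `T`. -/
def P (n : ℕ) : Measure (Fin n → ℝ × ℝ) := Measure.pi fun _ => μT

/-- The random convex chain: convex hull of the points together with `(1,0)` and `(0,1)`. -/
def Tchain (n : ℕ) (ω : Fin n → ℝ × ℝ) : Set (ℝ × ℝ) :=
  convexHull ℝ (Set.range ω ∪ {(1, 0), (0, 1)})

/-- Normalized area `V_n = 2 vol(T_n)`. -/
def V (n : ℕ) (ω : Fin n → ℝ × ℝ) : ℝ := 2 * (volume (Tchain n ω)).toReal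

/-- Number of vertices of `T_n` other than the two corners. -/
def N (n : ℕ) (ω : Fin n → ℝ × ℝ) : ℕ :=
  (Set.extremePoints ℝ (Tchain n ω)).ncard - 2

/-- Normalized moments `q_{n,k} = C(n+k,k) E[V_n^k]`. -/
def q (n k : ℕ) : ℝ := ((n + k).choose k : ℝ) * ∫ ω, (V n ω) ^ k ∂ P n

/-- Probability generating function of `N_n`. -/
def G (n : ℕ) (t : ℝ) : ℝ := ∫ ω, t ^ (N n ω) ∂ P n

/-- Harmonic number. -/
def H (j : ℕ) : ℝ := ∑ i ∈ Finset.range j, 1 / ((i : ℝ) + 1)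

/-- Generalized harmonic number of order 2. -/
def H2 (j : ℕ) : ℝ := ∑ i ∈ Finset.range j, 1 / ((i : ℝ) + 1) ^ 2

/-- `c(k,ℓ)`: elementary symmetric polynomial `e_k` of `2/(j(j+1))`, `j = 1,…,ℓ`. -/
def c (k l : ℕ) : ℝ :=
  ∑ S ∈ (Finset.Icc 1 l).powersetCard k, ∏ j ∈ S, 2 / ((j : ℝ) * ((j : ℝ) + 1))

/-!
The moments satisfy a recurrence because almost surely exactly one of the `n` points, `x` say, has
least projection `u` from the apex `(0, 1)` onto the first axis. Write `x = (t u, 1 - t)`. The other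
`n - 1` points lie in the triangle with vertices `(u, 0)`, `(1, 0)`, `(0, 1)`, and the affine map
carrying it to `T` and fixing the two corners moves `x` to `(0, s)` with `s = 1 - t`; it accounts
for a factor `(1 - u) ^ (n - 1 + k)`. Once a vertex lies at `(0, s)`, the sample points above the
line through `(0, s)` and `(1, 0)` do not change the hull, while those below it form an affine copy
of a uniform sample, so that the normalised area is `(1 - s) + s W` with `W` the normalised area of
that sample. Expanding the number of points below the line and the power of the area by the binomial
theorem leaves beta integrals in `u` and `t`, which yield the binomial coefficient in the
denominator.
-/

section Convex

lemma convexHull_insert_of_mem_convexHull {𝕜 E : Type*} [Semiring 𝕜] [PartialOrder 𝕜]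
    [AddCommMonoid E] [Module 𝕜 E] {s : Set E} {x : E} (hx : x ∈ convexHull 𝕜 s) :
    convexHull 𝕜 (insert x s) = convexHull 𝕜 s :=
  (convexHull_min (Set.insert_subset hx (subset_convexHull 𝕜 s)) (convex_convexHull 𝕜 s)).antisymm
    (convexHull_mono (Set.subset_insert x s))

/- A point of the hull lying below the level `r` is on a segment from `p` to a point of `D`; that
segment crosses the level `r` inside `D`, and stays in `D` afterwards. -/
lemma convexHull_insert_subset_of_level_subset {𝕜 E : Type*} [Field 𝕜] [LinearOrder 𝕜]
    [IsStrictOrderedRing 𝕜] [AddCommGroup E] [Module 𝕜 E] {K D : Set E} (hK : Convex 𝕜 K)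
    (hD : Convex 𝕜 D) (hDK : D ⊆ K) {p : E} (hp : p ∈ K) (ℓ : E →ₗ[𝕜] 𝕜) {r : 𝕜}
    (hr : r ≤ ℓ p) (hlevel : ∀ x ∈ K, ℓ x = r → x ∈ D) :
    convexHull 𝕜 (insert p D) ⊆ {x ∈ K | r ≤ ℓ x} ∪ D := by
  intro x hx
  have hxK : x ∈ K := convexHull_min (Set.insert_subset hp hDK) hK hx
  rcases le_or_gt r (ℓ x) with hrx | hxr
  · exact Or.inl ⟨hxK, hrx⟩
  obtain rfl | hne := D.eq_empty_or_nonempty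
  · rw [insert_empty_eq, convexHull_singleton] at hx
    exact absurd (hx ▸ hr) hxr.not_ge
  rw [convexHull_insert hne, hD.convexHull_eq, convexJoin_singleton_left, Set.mem_iUnion₂] at hx
  obtain ⟨c, hc, hxc⟩ := hx
  obtain ⟨z, hz, hzr⟩ : r ∈ ℓ '' segment 𝕜 x p := by
    have := image_segment 𝕜 ℓ.toAffineMap x p
    simp only [LinearMap.coe_toAffineMap] at this
    rw [this, segment_eq_Icc (hxr.le.trans hr)]
    exact ⟨hxr.le, hr⟩
  have hzD : z ∈ D := hlevel z (hK.segment_subset hxK hp hz) hzr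
  rw [segment_symm, mem_segment_iff_wbtw] at hz
  have hzxc : Wbtw 𝕜 z x c := (mem_segment_iff_wbtw.1 hxc).trans_left_right hz
  exact Or.inr (hD.segment_subset hzD hc (mem_segment_iff_wbtw.2 hzxc))

variable {ι E : Type*} [AddCommGroup E] [Module ℝ E]

lemma convexHull_range_eq_image_stdSimplex [Fintype ι] (v : ι → E) :
    convexHull ℝ (Set.range v) = Fintype.linearCombination ℝ v '' stdSimplex ℝ ι := by
  classical
  rw [← convexHull_rangle_single_eq_stdSimplex, LinearMap.image_convexHull, ← Set.range_comp]
  congr 2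
  ext i
  simp [Fintype.linearCombination_apply_single]

variable [Finite ι] [TopologicalSpace E] [IsTopologicalAddGroup E] [ContinuousSMul ℝ E] [T2Space E]

lemma isClosed_setOf_mem_convexHull_range :
    IsClosed {z : (ι → E) × E | z.2 ∈ convexHull ℝ (Set.range z.1)} := by
  have := Fintype.ofFinite ι
  have hproj : {z : (ι → E) × E | z.2 ∈ convexHull ℝ (Set.range z.1)} =
      Prod.snd '' {y : stdSimplex ℝ ι × ((ι → E) × E) |
        Fintype.linearCombination ℝ y.2.1 y.1 = y.2.2} := by
    ext ⟨v, x⟩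
    simp only [Set.mem_ofPred_eq, convexHull_range_eq_image_stdSimplex]
    constructor
    · rintro ⟨w, hw, hwx⟩
      exact ⟨(⟨w, hw⟩, v, x), hwx, rfl⟩
    · rintro ⟨⟨w, _, _⟩, hwx, ⟨⟩⟩
      exact ⟨w, w.2, hwx⟩
  rw [hproj]
  refine isClosedMap_snd_of_compactSpace _ (isClosed_eq ?_ (by fun_prop))
  simp only [Fintype.linearCombination_apply]
  exact continuous_finsetSum _ fun i _ =>
    (((continuous_apply i).comp continuous_subtype_val).comp continuous_fst).smul (by fun_prop)

lemma measurable_measure_convexHull_range [MeasurableSpace E] [BorelSpace E]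
    [SecondCountableTopology E] (μ : Measure E) [SFinite μ] :
    Measurable fun v : ι → E => μ (convexHull ℝ (Set.range v)) :=
  measurable_measure_prodMk_left isClosed_setOf_mem_convexHull_range.measurableSet

end Convex

section Affine

variable {E : Type*} [NormedAddCommGroup E] [NormedSpace ℝ E] [MeasurableSpace E] [BorelSpace E]
  [FiniteDimensional ℝ E] (μ : Measure E) [μ.IsAddHaarMeasure]

lemma addHaar_image_affineMap (f : E →ᵃ[ℝ] E) (s : Set E) :
    μ (f '' s) = ENNReal.ofReal |LinearMap.det f.linear| * μ s := by
  have hf : f '' s = (· + f 0) '' (f.linear '' s) := by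
    rw [Set.image_image]
    exact Set.image_congr fun x _ => congr_fun f.decomp x
  rw [hf, Set.image_add_right, measure_preimage_add_right, Measure.addHaar_image_linearMap]

lemma restrict_image_affineMap (f : E →ᵃ[ℝ] E) (K : Set E) :
    μ.restrict (f '' K) =
      ENNReal.ofReal |LinearMap.det f.linear| • (μ.restrict K).map f := by
  have hf : Measurable f := f.continuous_of_finiteDimensional.measurable
  ext s hs
  rw [Measure.restrict_apply hs, Measure.smul_apply, Measure.map_apply hf hs,
    Measure.restrict_apply (hf hs), Set.inter_comm, ← Set.image_inter_preimage,
    addHaar_image_affineMap, Set.inter_comm, smul_eq_mul]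

lemma addHaar_setOf_linearMap_eq {ℓ : E →ₗ[ℝ] ℝ} (hℓ : ℓ ≠ 0) (r : ℝ) :
    μ {x | ℓ x = r} = 0 := by
  obtain ⟨v, hv⟩ : ∃ v, ℓ v ≠ 0 := by
    by_contra! h
    exact hℓ (LinearMap.ext h)
  let A : AffineSubspace ℝ E := (AffineSubspace.mk' r ⊥).comap ℓ.toAffineMap
  have hA : (A : Set E) = {x | ℓ x = r} := by
    ext x
    simp [A, sub_eq_zero]
  rw [← hA]
  refine Measure.addHaar_affineSubspace μ A fun htop => hv ?_
  have hmem : ∀ x, ℓ x = r := fun x => by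
    have : x ∈ (A : Set E) := by rw [htop]; trivial
    rwa [hA] at this
  have h0 := hmem 0
  rw [map_zero] at h0
  rw [hmem v, ← h0]

end Affine

section Sampling

open Finset.HasAntidiagonal (antidiagonal mem_antidiagonal)

lemma lintegral_pi_insertNth {n : ℕ} {α : Fin (n + 1) → Type*} [∀ i, MeasurableSpace (α i)]
    (μ : ∀ i, Measure (α i)) [∀ i, SigmaFinite (μ i)] (i : Fin (n + 1)) {f : (∀ j, α j) → ENNReal}
    (hf : Measurable f) :
    ∫⁻ ω, f ω ∂Measure.pi μ =
      ∫⁻ x, ∫⁻ ω, f (i.insertNth x ω) ∂Measure.pi (fun j => μ (i.succAbove j)) ∂μ i := by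
  have he := (measurePreserving_piFinSuccAbove μ i).symm
  exact (he.lintegral_comp hf).symm.trans (lintegral_prod _ (hf.comp he.measurable).aemeasurable)

variable {X : Type*} [MeasurableSpace X]

lemma measurable_insertNth {n : ℕ} (i : Fin (n + 1)) :
    Measurable fun z : X × (Fin n → X) => (i.insertNth z.1 z.2 : Fin (n + 1) → X) :=
  (MeasurableEquiv.piFinSuccAbove (fun _ => X) i).symm.measurable

lemma measurable_insert_range {F : Set X → ENNReal} {n : ℕ}
    (hF : Measurable fun ω : Fin (n + 1) → X => F (Set.range ω)) :
    Measurable fun z : X × (Fin n → X) => F (insert z.1 (Set.range z.2)) := by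
  convert hF.comp (measurable_insertNth 0) using 2
  exact congr_arg F (Fin.range_insertNth _ _ _).symm

lemma lintegral_pi_range_succ (μ : Measure X) [SigmaFinite μ] {F : Set X → ENNReal} {n : ℕ}
    (hF : Measurable fun ω : Fin (n + 1) → X => F (Set.range ω)) :
    ∫⁻ ω : Fin (n + 1) → X, F (Set.range ω) ∂Measure.pi (fun _ => μ) =
      ∫⁻ x, ∫⁻ ω : Fin n → X, F (insert x (Set.range ω)) ∂Measure.pi (fun _ => μ) ∂μ := by
  rw [lintegral_pi_insertNth (fun _ => μ) 0 hF]
  simp only [Fin.range_insertNth]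
  rfl

section Irrelevant

variable (μ : Measure X) [SigmaFinite μ] {B : Set X} (hB : MeasurableSet B) (n : ℕ)
  {F : Set X → ENNReal} (hF : ∀ m, Measurable fun ω : Fin m → X => F (Set.range ω))
  (hFB : ∀ᵐ x ∂μ, x ∉ B → ∀ S, F (insert x S) = F S)
include hB hF hFB

lemma lintegral_pi_range_succ_of_insert_eq :
    ∫⁻ ω : Fin (n + 1) → X, F (Set.range ω) ∂Measure.pi (fun _ => μ) =
      ∫⁻ x in B, ∫⁻ ω : Fin n → X, F (insert x (Set.range ω)) ∂Measure.pi (fun _ => μ) ∂μ +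
        μ Bᶜ * ∫⁻ ω : Fin n → X, F (Set.range ω) ∂Measure.pi (fun _ => μ) := by
  rw [lintegral_pi_range_succ μ (hF _), ← lintegral_add_compl _ hB, mul_comm, ← setLIntegral_const]
  congr 1
  refine setLIntegral_congr_fun_ae hB.compl ?_
  filter_upwards [hFB] with x hx hxB
  simp only [hx hxB]

lemma lintegral_pi_range_of_insert_eq :
    ∫⁻ ω : Fin n → X, F (Set.range ω) ∂Measure.pi (fun _ => μ) =
      ∑ m ∈ antidiagonal n, n.choose m.1 * (μ Bᶜ ^ m.2 *
        ∫⁻ ω : Fin m.1 → X, F (Set.range ω) ∂Measure.pi (fun _ => μ.restrict B)) := by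
  induction n generalizing F with
  | zero => simp
  | succ n ih =>
    have hmeas : ∀ m, Measurable fun x => ∫⁻ ω : Fin m → X, F (insert x (Set.range ω))
        ∂Measure.pi (fun _ => μ.restrict B) := fun m =>
      (measurable_insert_range (hF (m + 1))).lintegral_prod_right'
    have hinside : ∫⁻ x in B, ∫⁻ ω : Fin n → X, F (insert x (Set.range ω))
          ∂Measure.pi (fun _ => μ) ∂μ =
        ∑ m ∈ antidiagonal n, n.choose m.1 * μ Bᶜ ^ m.2 *
          ∫⁻ ω : Fin (m.1 + 1) → X, F (Set.range ω) ∂Measure.pi (fun _ => μ.restrict B) := by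
      simp_rw [lintegral_pi_range_succ (μ.restrict B) (hF _), ← lintegral_const_mul _ (hmeas _)]
      rw [← lintegral_finsetSum _ fun m _ => (hmeas _).const_mul _]
      simp_rw [mul_assoc]
      refine lintegral_congr fun x => ih (F := fun S => F (insert x S))
        (fun m => (measurable_insert_range (hF (m + 1))).comp measurable_prodMk_left) ?_
      filter_upwards [hFB] with y hy hyB S
      rw [Set.insert_comm, hy hyB]
    rw [lintegral_pi_range_succ_of_insert_eq μ hB n hF hFB, hinside, ih hF hFB, Finset.mul_sum,
      Finset.sum_antidiagonal_choose_succ_mul (fun i j => μ Bᶜ ^ j *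
        ∫⁻ ω : Fin i → X, F (Set.range ω) ∂Measure.pi (fun _ => μ.restrict B)), add_comm]
    congr 1 <;> refine Finset.sum_congr rfl fun m hm => ?_
    · ring
    · rw [Nat.choose_symm_of_eq_add (mem_antidiagonal.1 hm).symm, mul_assoc]

end Irrelevant

section Minimum

variable {α : Type*} [LinearOrder α] [TopologicalSpace α] [OrderClosedTopology α]
  [SecondCountableTopology α] [MeasurableSpace α] [OpensMeasurableSpace α]
  (μ : Measure X) [SigmaFinite μ] {h : X → α}

lemma ae_pi_injective_comp (hh : Measurable h) (h0 : ∀ c, μ {x | h x = c} = 0) (n : ℕ) :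
    ∀ᵐ ω ∂Measure.pi fun _ : Fin (n + 1) => μ, Function.Injective (h ∘ ω) := by
  have hne : ∀ i : Fin (n + 1), ∀ j, ∀ᵐ ω ∂Measure.pi fun _ : Fin (n + 1) => μ,
      h (ω i) ≠ h (ω (i.succAbove j)) := by
    intro i j
    have hprod : ∀ᵐ z ∂μ.prod (Measure.pi fun _ : Fin n => μ), h z.1 ≠ h (z.2 j) := by
      have hmeas : MeasurableSet {z : X × (Fin n → X) | h z.1 = h (z.2 j)} :=
        measurableSet_eq_fun (by fun_prop) (by fun_prop)
      simp only [ae_iff, not_not]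
      rw [Measure.prod_apply_symm hmeas]
      simp [h0]
    exact (measurePreserving_piFinSuccAbove (fun _ => μ) i).quasiMeasurePreserving.ae hprod
  filter_upwards [ae_all_iff.2 fun i => ae_all_iff.2 (hne i)] with ω hω i j hij
  by_contra hji
  obtain ⟨j, rfl⟩ := Fin.exists_succAbove_eq (Ne.symm hji)
  exact hω i j hij

variable {n : ℕ}

lemma measurableSet_setOf_isMin (hh : Measurable h) (i : Fin n) :
    MeasurableSet {ω : Fin n → X | ∀ j ≠ i, h (ω i) < h (ω j)} := by
  simp only [Set.ofPred_forall]
  exact MeasurableSet.iInter fun j => MeasurableSet.iInter fun _ =>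
    measurableSet_lt (by fun_prop) (by fun_prop)

lemma lintegral_pi_restrict_lt (hh : Measurable h) (x : X) (f : (Fin n → X) → ENNReal) :
    ∫⁻ ω, f ω ∂Measure.pi (fun _ => μ.restrict {y | h x < h y}) =
      ∫⁻ ω, {ω | ∀ j, h x < h (ω j)}.indicator f ω ∂Measure.pi (fun _ => μ) := by
  have hx : MeasurableSet {y | h x < h y} := measurableSet_lt measurable_const hh
  rw [← Measure.restrict_pi_pi, ← lintegral_indicator (MeasurableSet.univ_pi fun _ => hx)]
  simp only [Set.pi, Set.mem_univ, true_imp_iff, Set.mem_ofPred_eq]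

variable {F : Set X → ENNReal}
  (hF : Measurable fun ω : Fin (n + 1) → X => F (Set.range ω))
include hF

lemma measurable_lintegral_pi_restrict_lt (hh : Measurable h) :
    Measurable fun x => ∫⁻ ω : Fin n → X, F (insert x (Set.range ω))
      ∂Measure.pi (fun _ => μ.restrict {y | h x < h y}) := by
  have hlt : MeasurableSet {z : X × (Fin n → X) | ∀ j, h z.1 < h (z.2 j)} := by
    simp only [Set.ofPred_forall]
    exact MeasurableSet.iInter fun j => measurableSet_lt (by fun_prop) (by fun_prop)
  simp_rw [lintegral_pi_restrict_lt μ hh]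
  exact ((measurable_insert_range hF).indicator hlt).lintegral_prod_right'

lemma setLIntegral_pi_isMin (hh : Measurable h) (i : Fin (n + 1)) :
    ∫⁻ ω in {ω | ∀ j ≠ i, h (ω i) < h (ω j)}, F (Set.range ω) ∂Measure.pi (fun _ => μ) =
      ∫⁻ x, ∫⁻ ω : Fin n → X, F (insert x (Set.range ω))
        ∂Measure.pi (fun _ => μ.restrict {y | h x < h y}) ∂μ := by
  have hmin := measurableSet_setOf_isMin hh i
  rw [← lintegral_indicator hmin, lintegral_pi_insertNth (fun _ => μ) i (hF.indicator hmin)]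
  refine lintegral_congr fun x => ?_
  rw [lintegral_pi_restrict_lt μ hh]
  refine lintegral_congr fun ω => ?_
  simp only [Set.indicator, Set.mem_ofPred_eq, Fin.forall_iff_succAbove i, ne_eq, not_true_eq_false,
    false_imp_iff, true_and, Fin.succAbove_ne, not_false_eq_true, true_imp_iff,
    Fin.insertNth_apply_same, Fin.insertNth_apply_succAbove, Fin.range_insertNth]
  rfl

lemma lintegral_pi_range_eq_mul_lintegral_min (hh : Measurable h)
    (h0 : ∀ c, μ {x | h x = c} = 0) :
    ∫⁻ ω : Fin (n + 1) → X, F (Set.range ω) ∂Measure.pi (fun _ => μ) =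
      (n + 1 : ℕ) * ∫⁻ x, ∫⁻ ω : Fin n → X, F (insert x (Set.range ω))
        ∂Measure.pi (fun _ => μ.restrict {y | h x < h y}) ∂μ := by
  let A : Fin (n + 1) → Set (Fin (n + 1) → X) := fun i => {ω | ∀ j ≠ i, h (ω i) < h (ω j)}
  have hA : ∀ᵐ ω ∂Measure.pi fun _ : Fin (n + 1) => μ, ω ∈ ⋃ i, A i := by
    filter_upwards [ae_pi_injective_comp μ hh h0 n] with ω hω
    obtain ⟨i, hi⟩ := Finite.exists_min (h ∘ ω)
    exact Set.mem_iUnion.2 ⟨i, fun j hj => (hi j).lt_of_ne (hω.ne hj.symm)⟩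
  have hdisj : Pairwise (Function.onFun Disjoint A) := fun i j hij =>
    Set.disjoint_left.2 fun ω hi hj => (hi j hij.symm).asymm (hj i hij)
  rw [← Measure.restrict_eq_self_of_ae_mem hA,
    lintegral_iUnion (measurableSet_setOf_isMin hh) hdisj, tsum_fintype]
  simp only [setLIntegral_pi_isMin μ hF hh, Finset.sum_const, Finset.card_univ, Fintype.card_fin,
    nsmul_eq_mul]

end Minimum

lemma pi_smul_map {ι Y : Type*} [Fintype ι] [MeasurableSpace Y] (μ : Measure X)
    [IsFiniteMeasure μ] {f : X → Y} (hf : Measurable f) {s : ENNReal} (hs : s ≠ ⊤) :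
    Measure.pi (fun _ : ι => s • μ.map f) =
      s ^ Fintype.card ι • (Measure.pi fun _ : ι => μ).map (fun ω i => f (ω i)) := by
  have : IsFiniteMeasure (s • μ.map f) := Measure.smul_finite _ hs
  refine Measure.pi_eq fun A _ => ?_
  rw [Measure.smul_apply, Measure.pi_map_pi fun _ => hf.aemeasurable, Measure.pi_pi]
  simp only [Measure.smul_apply, smul_eq_mul, Finset.prod_mul_distrib, Finset.prod_const,
    Finset.card_univ]

lemma lintegral_pi_smul_map {ι Y : Type*} [Fintype ι] [MeasurableSpace Y] (μ : Measure X)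
    [IsFiniteMeasure μ] {f : X → Y} (hf : Measurable f) {s : ENNReal} (hs : s ≠ ⊤)
    {g : (ι → Y) → ENNReal} (hg : Measurable g) :
    ∫⁻ ω, g ω ∂Measure.pi (fun _ : ι => s • μ.map f) =
      s ^ Fintype.card ι * ∫⁻ ω, g (f ∘ ω) ∂Measure.pi (fun _ : ι => μ) := by
  rw [pi_smul_map μ hf hs, lintegral_smul_measure, lintegral_map hg (by fun_prop), smul_eq_mul]
  rfl

end Sampling

lemma lintegral_Ioo_pow_mul_one_sub_pow (a b : ℕ) :
    ∫⁻ t in Set.Ioo (0 : ℝ) 1, ENNReal.ofReal (t ^ a * (1 - t) ^ b) =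
      ENNReal.ofReal (1 / ((a + b + 1) * (a + b).choose b)) := by
  have hbeta : ProbabilityTheory.beta (a + 1) (b + 1) =
      1 / ((a + b + 1) * (a + b).choose b) := by
    rw [ProbabilityTheory.beta, Real.Gamma_nat_eq_factorial, Real.Gamma_nat_eq_factorial,
      show (a + 1 + (b + 1) : ℝ) = (a + b + 1 : ℕ) + 1 by push_cast; ring,
      Real.Gamma_nat_eq_factorial, Nat.factorial_succ, Nat.cast_choose ℝ (Nat.le_add_left b a),
      Nat.add_sub_cancel]
    push_cast
    field_simp
  have hpos := ProbabilityTheory.beta_pos (α := a + 1) (β := b + 1) (by positivity) (by positivity)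
  have hone := ProbabilityTheory.lintegral_betaPDF_eq_one (α := a + 1) (β := b + 1)
    (by positivity) (by positivity)
  rw [ProbabilityTheory.lintegral_betaPDF] at hone
  simp only [add_sub_cancel_right, Real.rpow_natCast] at hone
  rw [← hbeta, ← mul_one (ENNReal.ofReal _), ← hone,
    ← lintegral_const_mul' _ _ ENNReal.ofReal_ne_top]
  refine lintegral_congr fun t => ?_
  rw [← ENNReal.ofReal_mul hpos.le]
  congr 1
  field_simp

lemma setLIntegral_Icc_zero_eq_mul {t : ℝ} (ht : 0 < t) (f : ℝ → ENNReal) :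
    ∫⁻ x in Set.Icc 0 t, f x = ENNReal.ofReal t * ∫⁻ u in Set.Ioo (0 : ℝ) 1, f (t * u) := by
  have himage : Set.Ioo 0 t = (t * ·) '' Set.Ioo (0 : ℝ) 1 := by
    rw [Set.image_mul_left_Ioo ht, mul_zero, mul_one]
  have hderiv : ∀ u ∈ Set.Ioo (0 : ℝ) 1, HasDerivWithinAt (t * ·) t (Set.Ioo 0 1) u := fun u _ => by
    simpa using ((hasDerivAt_id' u).const_mul t).hasDerivWithinAt
  rw [← restrict_Ioo_eq_restrict_Icc, himage,
    lintegral_image_eq_lintegral_abs_deriv_mul measurableSet_Ioo hderiv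
      (mul_right_injective₀ ht.ne').injOn, abs_of_pos ht,
    lintegral_const_mul' _ _ ENNReal.ofReal_ne_top]

section Triangle

lemma mem_T_iff {p : ℝ × ℝ} : p ∈ T ↔ 0 ≤ p.1 ∧ 0 ≤ p.2 ∧ p.1 + p.2 ≤ 1 := by
  have hT : T = {p : ℝ × ℝ | 0 ≤ p.1} ∩ ({p | 0 ≤ p.2} ∩ {p | p.1 + p.2 ≤ 1}) := by
    refine (convexHull_min ?_ ?_).antisymm ?_
    · rintro p (rfl | rfl | rfl) <;> norm_num
    · exact (convex_halfSpace_ge (LinearMap.fst ℝ ℝ ℝ).isLinear 0).inter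
        ((convex_halfSpace_ge (LinearMap.snd ℝ ℝ ℝ).isLinear 0).inter
          (convex_halfSpace_le (LinearMap.fst ℝ ℝ ℝ + LinearMap.snd ℝ ℝ ℝ).isLinear 1))
    · rintro ⟨x, y⟩ ⟨hx, hy, hxy⟩
      have hcomb := (convex_convexHull ℝ {((0 : ℝ), (0 : ℝ)), (1, 0), (0, 1)}).sum_mem
        (t := Finset.univ) (w := ![1 - (x + y), x, y]) (z := ![(0, 0), (1, 0), (0, 1)]) ?_ ?_ ?_
      · simpa [Fin.sum_univ_three] using hcomb
      · intro i _
        fin_cases i <;> simpa using ‹_›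
      · simp only [Fin.sum_univ_three, Matrix.cons_val]
        ring
      · intro i _
        exact subset_convexHull ℝ _ (by fin_cases i <;> simp)
  rw [hT]
  rfl

lemma measurableSet_T : MeasurableSet T :=
  ((Set.toFinite _).isClosed_convexHull ℝ).measurableSet

lemma lintegral_μT {f : ℝ × ℝ → ENNReal} (hf : Measurable f) :
    ∫⁻ p, f p ∂μT = ∫⁻ t in Set.Ioo (0 : ℝ) 1, ENNReal.ofReal (2 * t) *
      ∫⁻ u in Set.Ioo (0 : ℝ) 1, f (t * u, 1 - t) := by
  have hslice : ∀ᵐ t : ℝ, ∫⁻ x, T.indicator f (x, 1 - t) =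
      (Set.Ioo (0 : ℝ) 1).indicator
        (fun t => ENNReal.ofReal t * ∫⁻ u in Set.Ioo (0 : ℝ) 1, f (t * u, 1 - t)) t := by
    filter_upwards [Measure.ae_ne volume (0 : ℝ), Measure.ae_ne volume (1 : ℝ)] with t ht0 ht1
    by_cases ht : t ∈ Set.Ioo (0 : ℝ) 1
    · have hmem : ∀ x, (x, 1 - t) ∈ T ↔ x ∈ Set.Icc 0 t := fun x => by
        simp only [mem_T_iff, Set.mem_Icc]
        grind
      rw [Set.indicator_of_mem ht, ← setLIntegral_Icc_zero_eq_mul ht.1 fun x => f (x, 1 - t),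
        ← lintegral_indicator measurableSet_Icc]
      simp only [Set.indicator, hmem]
    · have hmem : ∀ x, (x, 1 - t) ∉ T := fun x => by
        simp only [mem_T_iff]
        grind
      simp only [Set.indicator, hmem, ht, if_false, lintegral_zero]
  have hTf := hf.indicator measurableSet_T
  rw [μT, lintegral_smul_measure, ← lintegral_indicator measurableSet_T, Measure.volume_eq_prod,
    lintegral_prod_symm _ hTf.aemeasurable,
    ← lintegral_sub_left_eq_self (fun y => ∫⁻ x, T.indicator f (x, y)) 1,
    lintegral_congr_ae hslice, lintegral_indicator measurableSet_Ioo, smul_eq_mul,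
    ← lintegral_const_mul' _ _ ENNReal.ofNat_ne_top]
  refine lintegral_congr fun t => ?_
  rw [ENNReal.ofReal_mul zero_le_two, ENNReal.ofReal_ofNat, mul_assoc]

lemma μT_univ : μT Set.univ = 1 := by
  have hmean := lintegral_Ioo_pow_mul_one_sub_pow 1 0
  simp only [pow_one, pow_zero, mul_one] at hmean
  rw [← lintegral_one, lintegral_μT measurable_const]
  simp only [lintegral_one, Measure.restrict_apply_univ, Real.volume_Ioo, sub_zero,
    ENNReal.ofReal_one, mul_one, ENNReal.ofReal_mul zero_le_two]
  rw [lintegral_const_mul' _ _ ENNReal.ofReal_ne_top, hmean, ← ENNReal.ofReal_mul zero_le_two]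
  norm_num

instance : IsProbabilityMeasure μT := ⟨μT_univ⟩

lemma two_mul_volume_T : 2 * volume T = 1 := by
  simpa [μT] using μT_univ

lemma ae_mem_T : ∀ᵐ p ∂μT, p ∈ T :=
  Measure.ae_smul_measure (ae_restrict_mem measurableSet_T) 2

lemma μT_absolutelyContinuous : μT ≪ volume :=
  Measure.smul_absolutelyContinuous.trans Measure.restrict_le_self.absolutelyContinuous

lemma μT_restrict_image {f : ℝ × ℝ →ᵃ[ℝ] ℝ × ℝ} (hf : f '' T ⊆ T) :
    μT.restrict (f '' T) = ENNReal.ofReal |LinearMap.det f.linear| • μT.map f := by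
  rw [μT, Measure.restrict_smul, Measure.restrict_restrict_of_subset hf,
    restrict_image_affineMap, Measure.map_smul, smul_comm]

/-- The affine map of the plane sending the vertices `(0, 0)`, `(1, 0)`, `(0, 1)` of `T` to `a`,
`b`, `c`; it parametrises the triangle with vertices `a`, `b`, `c` by `T`. -/
def triangleMap (a b c : ℝ × ℝ) : ℝ × ℝ →ᵃ[ℝ] ℝ × ℝ :=
  ((LinearMap.toSpanSingleton ℝ (ℝ × ℝ) (b - a)).coprod
    (LinearMap.toSpanSingleton ℝ (ℝ × ℝ) (c - a))).toAffineMap + AffineMap.const ℝ (ℝ × ℝ) a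

variable (a b c : ℝ × ℝ)

lemma triangleMap_apply (p : ℝ × ℝ) :
    triangleMap a b c p = p.1 • (b - a) + p.2 • (c - a) + a := rfl

lemma det_triangleMap : LinearMap.det (triangleMap a b c).linear =
    (b.1 - a.1) * (c.2 - a.2) - (c.1 - a.1) * (b.2 - a.2) := by
  rw [← LinearMap.det_toMatrix (Module.Basis.finTwoProd ℝ), Matrix.det_fin_two]
  simp [triangleMap, LinearMap.toMatrix_apply]

lemma triangleMap_image_T : triangleMap a b c '' T = convexHull ℝ {a, b, c} := by
  rw [T, AffineMap.image_convexHull, Set.image_insert_eq, Set.image_pair]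
  simp [triangleMap_apply]

lemma measurableSet_triangleMap_image_T : MeasurableSet (triangleMap a b c '' T) := by
  rw [triangleMap_image_T]
  exact ((Set.toFinite _).isClosed_convexHull ℝ).measurableSet

variable {a b c}

/- Cramer's rule: the two quotients by the determinant are the barycentric coordinates of `p`. -/
lemma mem_triangleMap_image_T_iff (hd : 0 < LinearMap.det (triangleMap a b c).linear)
    {p : ℝ × ℝ} : p ∈ triangleMap a b c '' T ↔
      0 ≤ (p.1 - a.1) * (c.2 - a.2) - (c.1 - a.1) * (p.2 - a.2) ∧
      0 ≤ (b.1 - a.1) * (p.2 - a.2) - (p.1 - a.1) * (b.2 - a.2) ∧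
      ((p.1 - a.1) * (c.2 - a.2) - (c.1 - a.1) * (p.2 - a.2)) +
        ((b.1 - a.1) * (p.2 - a.2) - (p.1 - a.1) * (b.2 - a.2)) ≤
          LinearMap.det (triangleMap a b c).linear := by
  rw [det_triangleMap] at hd ⊢
  set d := (b.1 - a.1) * (c.2 - a.2) - (c.1 - a.1) * (b.2 - a.2) with hd_def
  constructor
  · rintro ⟨x, hx, rfl⟩
    obtain ⟨hx1, hx2, hx3⟩ := mem_T_iff.1 hx
    simp only [triangleMap_apply, Prod.fst_add, Prod.snd_add, Prod.smul_fst, Prod.smul_snd,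
      Prod.fst_sub, Prod.snd_sub, smul_eq_mul, add_sub_cancel_right]
    refine ⟨?_, ?_, ?_⟩
    · linear_combination mul_nonneg hx1 hd.le
    · linear_combination mul_nonneg hx2 hd.le
    · linear_combination mul_le_mul_of_nonneg_right hx3 hd.le
  · rintro ⟨h1, h2, h3⟩
    refine ⟨(_ / d, _ / d), mem_T_iff.2 ⟨div_nonneg h1 hd.le, div_nonneg h2 hd.le, ?_⟩, ?_⟩
    · rwa [← add_div, div_le_one hd]
    · ext <;> simp only [triangleMap_apply, Prod.fst_add, Prod.snd_add, Prod.smul_fst,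
        Prod.smul_snd, Prod.fst_sub, Prod.snd_sub, smul_eq_mul] <;> field_simp <;>
        rw [hd_def] <;> ring

section Cuts

variable {s : ℝ} (h0 : 0 < s) (h1 : s < 1)
include h0 h1

lemma triangleMap_lower_image_T :
    triangleMap (0, 0) (1, 0) (0, s) '' T = {p ∈ T | s * p.1 + p.2 ≤ s} := by
  ext p
  rw [mem_triangleMap_image_T_iff (by simpa [det_triangleMap]), det_triangleMap]
  simp only [Set.mem_ofPred_eq, mem_T_iff, sub_zero, zero_mul, mul_zero, one_mul]
  constructor
  · rintro ⟨hx, hy, hxy⟩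
    refine ⟨⟨?_, hy, ?_⟩, ?_⟩ <;> nlinarith
  · rintro ⟨⟨hx, hy, -⟩, hxy⟩
    refine ⟨?_, hy, ?_⟩ <;> nlinarith

lemma triangleMap_upper_image_T :
    triangleMap (0, s) (1, 0) (0, 1) '' T = {p ∈ T | s ≤ s * p.1 + p.2} := by
  ext p
  rw [mem_triangleMap_image_T_iff (by simpa [det_triangleMap]), det_triangleMap]
  simp only [Set.mem_ofPred_eq, mem_T_iff, sub_zero, zero_mul, one_mul, zero_sub, mul_neg]
  constructor
  · rintro ⟨hx, hy, hxy⟩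
    have hx' : 0 ≤ p.1 := by nlinarith
    have hx1 : p.1 ≤ 1 := by nlinarith
    refine ⟨⟨?_, ?_, ?_⟩, ?_⟩ <;> nlinarith
  · rintro ⟨⟨hx, -, hxy⟩, hs⟩
    refine ⟨?_, ?_, ?_⟩ <;> nlinarith

lemma triangleMap_right_image_T :
    triangleMap (s, 0) (1, 0) (0, 1) '' T = {p ∈ T | s ≤ p.1 + s * p.2} := by
  ext p
  rw [mem_triangleMap_image_T_iff (by simpa [det_triangleMap]), det_triangleMap]
  simp only [Set.mem_ofPred_eq, mem_T_iff, sub_zero, mul_one, mul_zero, zero_sub, neg_mul]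
  constructor
  · rintro ⟨hx, hy, hxy⟩
    have hy' : 0 ≤ p.2 := by nlinarith
    have hy1 : p.2 ≤ 1 := by nlinarith
    refine ⟨⟨?_, ?_, ?_⟩, ?_⟩ <;> nlinarith
  · rintro ⟨⟨-, hy, hxy⟩, hs⟩
    refine ⟨?_, ?_, ?_⟩ <;> nlinarith

end Cuts

end Triangle

section ApexProjection

/-- The abscissa of the point where the line through the apex `(0, 1)` of `T` and `p` meets the
first axis. It has the junk value `0` on the horizontal line through the apex. -/
def apexProj (p : ℝ × ℝ) : ℝ := p.1 / (1 - p.2)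

@[fun_prop]
lemma measurable_apexProj : Measurable apexProj := by
  unfold apexProj
  fun_prop

lemma apexProj_mul_sub {t : ℝ} (ht : t ≠ 0) (u : ℝ) : apexProj (t * u, 1 - t) = u := by
  simp only [apexProj, sub_sub_cancel]
  field_simp

lemma ae_snd_ne_one : ∀ᵐ p ∂μT, p.2 ≠ 1 := by
  have hℓ : LinearMap.snd ℝ ℝ ℝ ≠ 0 := fun h => by simpa using LinearMap.congr_fun h (0, 1)
  refine ae_iff.2 (μT_absolutelyContinuous ?_)
  simpa using addHaar_setOf_linearMap_eq volume hℓ 1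

lemma ae_apexProj_ne (u : ℝ) : ∀ᵐ p ∂μT, apexProj p ≠ u := by
  have hline : ∀ᵐ p ∂μT, p.1 + u * p.2 ≠ u := by
    have hℓ : LinearMap.fst ℝ ℝ ℝ + u • LinearMap.snd ℝ ℝ ℝ ≠ 0 := fun h => by
      simpa using LinearMap.congr_fun h (1, 0)
    refine ae_iff.2 (μT_absolutelyContinuous ?_)
    simpa using addHaar_setOf_linearMap_eq volume hℓ u
  filter_upwards [hline, ae_snd_ne_one] with p hp hp1 hpu
  rw [apexProj, div_eq_iff (sub_ne_zero.2 hp1.symm)] at hpu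
  exact hp (by linear_combination hpu)

lemma μT_restrict_lt_apexProj {u : ℝ} (h0 : 0 < u) (h1 : u < 1) :
    μT.restrict {p | u < apexProj p} =
      ENNReal.ofReal (1 - u) • μT.map (triangleMap (u, 0) (1, 0) (0, 1)) := by
  have himage := triangleMap_right_image_T h0 h1
  have hdet : LinearMap.det (triangleMap (u, 0) (1, 0) (0, 1)).linear = 1 - u := by
    simp [det_triangleMap]
  rw [← abs_of_pos (sub_pos.2 h1), ← hdet,
    ← μT_restrict_image (himage ▸ Set.sep_subset _ _), himage]
  refine Measure.restrict_congr_set ?_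
  filter_upwards [ae_mem_T, ae_apexProj_ne u, ae_snd_ne_one] with p hp hpu hp1
  have hpos : 0 < 1 - p.2 := by
    obtain ⟨hx, -, hxy⟩ := mem_T_iff.1 hp
    exact sub_pos.2 (lt_of_le_of_ne (by linarith) hp1)
  refine propext (?_ : u < apexProj p ↔ p ∈ T ∧ u ≤ p.1 + u * p.2)
  rw [← hpu.symm.le_iff_lt, apexProj, le_div_iff₀ hpos, and_iff_right hp]
  constructor <;> intro <;> linarith

end ApexProjection

section HullArea

/-- The normalised area `2 vol (conv (S ∪ {(1, 0), (0, 1)}))` as a function of the point set `S`,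
with values in `[0, ∞]`. -/
def hullArea (S : Set (ℝ × ℝ)) : ENNReal := 2 * volume (convexHull ℝ (S ∪ {(1, 0), (0, 1)}))

lemma measurable_hullArea_range (n : ℕ) :
    Measurable fun ω : Fin n → ℝ × ℝ => hullArea (Set.range ω) := by
  have hcorners : Measurable fun ω : Fin n → ℝ × ℝ =>
      Sum.elim ω ![((1 : ℝ), (0 : ℝ)), (0, 1)] := by
    refine measurable_pi_iff.2 ?_
    rintro (i | i)
    · exact measurable_pi_apply i
    · exact measurable_const
  have hrange : ∀ ω : Fin n → ℝ × ℝ, Set.range (Sum.elim ω ![((1 : ℝ), (0 : ℝ)), (0, 1)]) =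
      Set.range ω ∪ {(1, 0), (0, 1)} := fun ω => by
    simp only [Set.Sum.elim_range, Matrix.range_cons, Matrix.range_empty, Set.union_empty,
      Set.singleton_union]
  simpa only [hullArea, Function.comp_def, hrange] using
    ((measurable_measure_convexHull_range volume).comp hcorners).const_mul 2

lemma hullArea_insert_of_mem_convexHull {S : Set (ℝ × ℝ)} {x : ℝ × ℝ}
    (hx : x ∈ convexHull ℝ (S ∪ {(1, 0), (0, 1)})) : hullArea (insert x S) = hullArea S := by
  rw [hullArea, Set.insert_union, convexHull_insert_of_mem_convexHull hx, hullArea]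

lemma hullArea_affineMap_image {f : ℝ × ℝ →ᵃ[ℝ] ℝ × ℝ} (h₁ : f (1, 0) = (1, 0))
    (h₂ : f (0, 1) = (0, 1)) (S : Set (ℝ × ℝ)) :
    hullArea (f '' S) = ENNReal.ofReal |LinearMap.det f.linear| * hullArea S := by
  have himage : f '' S ∪ {(1, 0), (0, 1)} = f '' (S ∪ {(1, 0), (0, 1)}) := by
    rw [Set.image_union, Set.image_pair, h₁, h₂]
  rw [hullArea, himage, ← AffineMap.image_convexHull, addHaar_image_affineMap, mul_left_comm,
    hullArea]

lemma convexHull_union_corners_subset_T {S : Set (ℝ × ℝ)} (hS : S ⊆ T) :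
    convexHull ℝ (S ∪ {(1, 0), (0, 1)}) ⊆ T :=
  convexHull_min (Set.union_subset hS ((Set.subset_insert _ _).trans (subset_convexHull ℝ _)))
    (convex_convexHull ℝ _)

lemma hullArea_le_one {S : Set (ℝ × ℝ)} (hS : S ⊆ T) : hullArea S ≤ 1 := by
  rw [← two_mul_volume_T, hullArea]
  gcongr
  exact convexHull_union_corners_subset_T hS

lemma triangleMap_image_convexHull_union_corners (a b c : ℝ × ℝ) (S : Set (ℝ × ℝ)) :
    triangleMap a b c '' convexHull ℝ (S ∪ {(1, 0), (0, 1)}) =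
      convexHull ℝ (triangleMap a b c '' S ∪ {b, c}) := by
  rw [AffineMap.image_convexHull, Set.image_union, Set.image_pair]
  simp [triangleMap_apply]

lemma mem_triangleMap_image_of_mem_edge {s : ℝ} (S : Set (ℝ × ℝ)) {x : ℝ × ℝ} (hx : x ∈ T)
    (hxs : s * x.1 + x.2 = s) :
    x ∈ triangleMap (0, 0) (1, 0) (0, s) '' convexHull ℝ (S ∪ {(1, 0), (0, 1)}) := by
  obtain ⟨hx1, hx2, hx3⟩ := mem_T_iff.1 hx
  rw [triangleMap_image_convexHull_union_corners]
  refine segment_subset_convexHull (x := (1, 0)) (y := (0, s)) (Or.inr (Or.inl rfl))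
    (Or.inr (Or.inr rfl)) ⟨x.1, 1 - x.1, hx1, by linarith, add_sub_cancel _ _, ?_⟩
  ext
  · simp
  · simpa using by linear_combination -hxs

section LeftEdge

variable {s : ℝ} (h0 : 0 < s) (h1 : s < 1)
include h0 h1

lemma hullArea_insert_left_insert {x : ℝ × ℝ} (hxT : x ∈ T)
    (hx : x ∉ triangleMap (0, 0) (1, 0) (0, s) '' T) (S : Set (ℝ × ℝ)) :
    hullArea (insert (0, s) (insert x S)) = hullArea (insert (0, s) S) := by
  have hupper : x ∈ convexHull ℝ {(0, s), (1, 0), (0, 1)} := by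
    rw [triangleMap_lower_image_T h0 h1] at hx
    rw [← triangleMap_image_T, triangleMap_upper_image_T h0 h1]
    exact ⟨hxT, le_of_not_ge fun h => hx ⟨hxT, h⟩⟩
  rw [Set.insert_comm]
  refine hullArea_insert_of_mem_convexHull (convexHull_mono ?_ hupper)
  exact Set.union_subset_union_left _ (Set.singleton_subset_iff.2 (Set.mem_insert _ _))

lemma convexHull_insert_left_image {S : Set (ℝ × ℝ)} (hS : S ⊆ T) :
    convexHull ℝ (insert (0, s) (triangleMap (0, 0) (1, 0) (0, s) '' S) ∪ {(1, 0), (0, 1)}) =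
      triangleMap (0, s) (1, 0) (0, 1) '' T ∪
        triangleMap (0, 0) (1, 0) (0, s) '' convexHull ℝ (S ∪ {(1, 0), (0, 1)}) := by
  set f := triangleMap (0, 0) (1, 0) (0, s)
  set D := f '' convexHull ℝ (S ∪ {(1, 0), (0, 1)})
  have hD_hull : D = convexHull ℝ (f '' S ∪ {(1, 0), (0, s)}) :=
    triangleMap_image_convexHull_union_corners _ _ _ _
  have hD_convex : Convex ℝ D := (convex_convexHull ℝ _).affine_image f
  have hDT : D ⊆ T := (Set.image_mono (convexHull_union_corners_subset_T hS)).trans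
    (triangleMap_lower_image_T h0 h1 ▸ Set.sep_subset _ _)
  have hgen : f '' S ∪ {(1, 0), (0, s)} ⊆ D := hD_hull ▸ subset_convexHull ℝ _
  obtain ⟨hSD, hvertices⟩ := Set.union_subset_iff.1 hgen
  refine Set.Subset.antisymm ?_ (Set.union_subset ?_ ?_)
  · have happex : (0, 1) ∈ T := mem_T_iff.2 (by norm_num)
    have hT_convex : Convex ℝ T := convex_convexHull ℝ _
    rw [triangleMap_upper_image_T h0 h1]
    refine (convexHull_mono ?_).trans (convexHull_insert_subset_of_level_subset hT_convex hD_convex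
      hDT happex (s • LinearMap.fst ℝ ℝ ℝ + LinearMap.snd ℝ ℝ ℝ) (by simpa using h1.le)
      fun x hx hxs => mem_triangleMap_image_of_mem_edge S hx hxs)
    grind
  · rw [triangleMap_image_T]
    refine convexHull_mono ?_
    exact Set.union_subset_union_left _ (Set.singleton_subset_iff.2 (Set.mem_insert _ _))
  · rw [hD_hull]
    refine convexHull_mono ?_
    grind

lemma hullArea_insert_left_image {S : Set (ℝ × ℝ)} (hS : S ⊆ T) :
    hullArea (insert (0, s) (triangleMap (0, 0) (1, 0) (0, s) '' S)) =
      ENNReal.ofReal (1 - s) + ENNReal.ofReal s * hullArea S := by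
  set f := triangleMap (0, 0) (1, 0) (0, s) with hf
  set g := triangleMap (0, s) (1, 0) (0, 1) with hg
  set C := convexHull ℝ (S ∪ {(1, 0), (0, 1)})
  have hdetf : LinearMap.det f.linear = s := by simp [hf, det_triangleMap]
  have hdetg : LinearMap.det g.linear = 1 - s := by simp [hg, det_triangleMap]
  have hdisj : AEDisjoint volume (g '' T) (f '' C) := by
    have hℓ : s • LinearMap.fst ℝ ℝ ℝ + LinearMap.snd ℝ ℝ ℝ ≠ 0 := fun h => by
      simpa using LinearMap.congr_fun h (0, 1)
    refine measure_mono_null ?_ (addHaar_setOf_linearMap_eq volume hℓ s)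
    rintro x ⟨hxg, hxf⟩
    rw [hg, triangleMap_upper_image_T h0 h1] at hxg
    have hxf' := Set.image_mono (convexHull_union_corners_subset_T hS) hxf
    rw [hf, triangleMap_lower_image_T h0 h1] at hxf'
    exact le_antisymm hxf'.2 hxg.2
  have hmeas : NullMeasurableSet (f '' C) volume :=
    ((convex_convexHull ℝ _).affine_image f).nullMeasurableSet volume
  rw [hullArea, convexHull_insert_left_image h0 h1 hS, measure_union₀ hmeas hdisj,
    addHaar_image_affineMap, addHaar_image_affineMap, hdetf, hdetg, abs_of_pos h0,
    abs_of_pos (sub_pos.2 h1), mul_add, mul_left_comm, two_mul_volume_T, mul_one, mul_left_comm,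
    hullArea]

end LeftEdge

end HullArea

section Moments

open Finset.HasAntidiagonal (antidiagonal mem_antidiagonal)

instance (n : ℕ) : IsProbabilityMeasure (P n) := by
  unfold P
  infer_instance

/-- The moment `E[V_n ^ k]` as an extended nonnegative real, so that integrals and sums can be
interchanged freely. -/
def hullMoment (n k : ℕ) : ENNReal := ∫⁻ ω, hullArea (Set.range ω) ^ k ∂P n

lemma ae_range_subset_T (n : ℕ) : ∀ᵐ ω ∂P n, Set.range ω ⊆ T := by
  simp only [Set.range_subset_iff]
  exact ae_all_iff.2 fun i => (Measure.quasiMeasurePreserving_eval (fun _ => μT) i).ae ae_mem_T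

lemma ae_hullArea_range_le_one (n : ℕ) : ∀ᵐ ω ∂P n, hullArea (Set.range ω) ≤ 1 := by
  filter_upwards [ae_range_subset_T n] with ω hω using hullArea_le_one hω

lemma hullMoment_ne_top (n k : ℕ) : hullMoment n k ≠ ⊤ := by
  refine ne_top_of_le_ne_top ENNReal.one_ne_top ?_
  refine (lintegral_mono_ae (g := fun _ => 1) ?_).trans_eq (by simp)
  filter_upwards [ae_hullArea_range_le_one n] with ω hω using pow_le_one' hω k

lemma integral_V_pow (n k : ℕ) : ∫ ω, V n ω ^ k ∂P n = (hullMoment n k).toReal := by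
  have hmeas := (measurable_hullArea_range n).pow_const k
  rw [hullMoment, ← integral_toReal hmeas.aemeasurable]
  · simp only [V, Tchain, hullArea, ENNReal.toReal_pow, ENNReal.toReal_mul, ENNReal.toReal_ofNat]
  · filter_upwards [ae_hullArea_range_le_one n] with ω hω
    exact ENNReal.pow_lt_top (hω.trans_lt ENNReal.one_lt_top)

lemma measurable_hullArea_insert_range (x : ℝ × ℝ) (n : ℕ) :
    Measurable fun ω : Fin n → ℝ × ℝ => hullArea (insert x (Set.range ω)) :=
  Measurable.of_uncurry_left (f := fun x (ω : Fin n → ℝ × ℝ) => hullArea (insert x (Set.range ω)))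
    (measurable_insert_range (measurable_hullArea_range (n + 1)))

lemma lintegral_hullArea_insert_right {t u : ℝ} (ht : t ≠ 0) (h0 : 0 < u) (h1 : u < 1)
    (n k : ℕ) :
    ∫⁻ ω : Fin n → ℝ × ℝ, hullArea (insert (t * u, 1 - t) (Set.range ω)) ^ k
        ∂Measure.pi (fun _ => μT.restrict {y | apexProj (t * u, 1 - t) < apexProj y}) =
      ENNReal.ofReal ((1 - u) ^ (n + k)) *
        ∫⁻ ω, hullArea (insert (0, 1 - t) (Set.range ω)) ^ k ∂P n := by
  set f := triangleMap (u, 0) (1, 0) (0, 1) with hf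
  have hdet : LinearMap.det f.linear = 1 - u := by simp [hf, det_triangleMap]
  have himage : ∀ ω : Fin n → ℝ × ℝ, hullArea (insert (t * u, 1 - t) (Set.range (f ∘ ω))) =
      ENNReal.ofReal (1 - u) * hullArea (insert (0, 1 - t) (Set.range ω)) := fun ω => by
    have hx : f (0, 1 - t) = (t * u, 1 - t) := by
      ext
      · simpa [hf, triangleMap_apply] using by ring
      · simp [hf, triangleMap_apply]
    rw [← hx, Set.range_comp, ← Set.image_insert_eq, hullArea_affineMap_image, hdet,
      abs_of_pos (sub_pos.2 h1)] <;> simp [hf, triangleMap_apply]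
  rw [apexProj_mul_sub ht, μT_restrict_lt_apexProj h0 h1,
    lintegral_pi_smul_map _ f.continuous_of_finiteDimensional.measurable ENNReal.ofReal_ne_top
      ((measurable_hullArea_insert_range _ n).pow_const k)]
  simp only [himage, mul_pow]
  rw [lintegral_const_mul' _ _ (ENNReal.pow_ne_top ENNReal.ofReal_ne_top), ← mul_assoc,
    Fintype.card_fin, ← pow_add, ENNReal.ofReal_pow (sub_pos.2 h1).le, P]

section LeftEdge

variable {s : ℝ} (h0 : 0 < s) (h1 : s < 1)
include h0 h1

lemma μT_restrict_lower_image : μT.restrict (triangleMap (0, 0) (1, 0) (0, s) '' T) =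
    ENNReal.ofReal s • μT.map (triangleMap (0, 0) (1, 0) (0, s)) := by
  rw [μT_restrict_image (triangleMap_lower_image_T h0 h1 ▸ Set.sep_subset _ _), det_triangleMap]
  simp [abs_of_pos h0]

lemma μT_compl_lower_image :
    μT (triangleMap (0, 0) (1, 0) (0, s) '' T)ᶜ = ENNReal.ofReal (1 - s) := by
  have hmeas : Measurable (triangleMap (0, 0) (1, 0) (0, s)) :=
    (AffineMap.continuous_of_finiteDimensional _).measurable
  have : IsProbabilityMeasure (μT.map (triangleMap (0, 0) (1, 0) (0, s))) :=
    Measure.isProbabilityMeasure_map hmeas.aemeasurable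
  rw [prob_compl_eq_one_sub (measurableSet_triangleMap_image_T _ _ _),
    ← Measure.restrict_apply_univ, μT_restrict_lower_image h0 h1]
  simp [ENNReal.ofReal_sub _ h0.le]

lemma lintegral_hullArea_insert_left_lower (n k : ℕ) :
    ∫⁻ ω : Fin n → ℝ × ℝ, hullArea (insert (0, s) (Set.range ω)) ^ k
        ∂Measure.pi (fun _ => μT.restrict (triangleMap (0, 0) (1, 0) (0, s) '' T)) =
      ∑ l ∈ antidiagonal k, k.choose l.1 *
        (ENNReal.ofReal (s ^ (n + l.1) * (1 - s) ^ l.2) * hullMoment n l.1) := by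
  have hs : 0 ≤ 1 - s := sub_nonneg.2 h1.le
  have hexpand : ∀ᵐ ω ∂P n,
      hullArea (insert (0, s) (Set.range (triangleMap (0, 0) (1, 0) (0, s) ∘ ω))) ^ k =
        ∑ l ∈ antidiagonal k, k.choose l.1 *
          (ENNReal.ofReal (s ^ l.1 * (1 - s) ^ l.2) * hullArea (Set.range ω) ^ l.1) := by
    filter_upwards [ae_range_subset_T n] with ω hω
    rw [Set.range_comp, hullArea_insert_left_image h0 h1 hω, add_comm, (Commute.all _ _).add_pow']
    refine Finset.sum_congr rfl fun l _ => ?_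
    rw [nsmul_eq_mul, ENNReal.ofReal_mul (by positivity), ENNReal.ofReal_pow h0.le,
      ENNReal.ofReal_pow hs]
    ring
  rw [μT_restrict_lower_image h0 h1, lintegral_pi_smul_map _
    (AffineMap.continuous_of_finiteDimensional _).measurable ENNReal.ofReal_ne_top
    ((measurable_hullArea_insert_range _ n).pow_const k)]
  change _ * ∫⁻ ω, _ ∂P n = _
  rw [lintegral_congr_ae hexpand, lintegral_finsetSum _ fun l _ =>
    (((measurable_hullArea_range n).pow_const l.1).const_mul _).const_mul _, Finset.mul_sum]
  refine Finset.sum_congr rfl fun l _ => ?_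
  rw [lintegral_const_mul' _ _ (ENNReal.natCast_ne_top _),
    lintegral_const_mul' _ _ ENNReal.ofReal_ne_top, ← hullMoment, pow_add, mul_assoc (s ^ n),
    ENNReal.ofReal_mul (p := s ^ n) (by positivity), ENNReal.ofReal_pow h0.le n, Fintype.card_fin]
  ring

lemma lintegral_hullArea_insert_left (n k : ℕ) :
    ∫⁻ ω, hullArea (insert (0, s) (Set.range ω)) ^ k ∂P n =
      ∑ m ∈ antidiagonal n, ∑ l ∈ antidiagonal k, (n.choose m.1 * k.choose l.1 : ℕ) *
        ENNReal.ofReal (s ^ (m.1 + l.1) * (1 - s) ^ (m.2 + l.2)) * hullMoment m.1 l.1 := by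
  have hs : 0 ≤ 1 - s := sub_nonneg.2 h1.le
  have habove : ∀ᵐ x ∂μT, x ∉ triangleMap (0, 0) (1, 0) (0, s) '' T → ∀ S,
      hullArea (insert (0, s) (insert x S)) ^ k = hullArea (insert (0, s) S) ^ k := by
    filter_upwards [ae_mem_T] with x hxT hx S
    rw [hullArea_insert_left_insert h0 h1 hxT hx]
  rw [P, lintegral_pi_range_of_insert_eq μT (measurableSet_triangleMap_image_T _ _ _) n
    (F := fun S => hullArea (insert (0, s) S) ^ k)
    (fun m => (measurable_hullArea_insert_range _ m).pow_const k) habove,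
    μT_compl_lower_image h0 h1]
  refine Finset.sum_congr rfl fun m _ => ?_
  rw [lintegral_hullArea_insert_left_lower h0 h1, Finset.mul_sum, Finset.mul_sum]
  refine Finset.sum_congr rfl fun l _ => ?_
  rw [pow_add (1 - s), mul_left_comm (s ^ _),
    ENNReal.ofReal_mul (p := (1 - s) ^ m.2) (by positivity), ENNReal.ofReal_pow hs, Nat.cast_mul]
  ring

end LeftEdge

lemma hullMoment_succ_eq_lintegral (n k : ℕ) :
    hullMoment (n + 1) k = ENNReal.ofReal ((n + 1) / (n + k + 1)) *
      ∫⁻ t in Set.Ioo (0 : ℝ) 1, ENNReal.ofReal (2 * t) *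
        ∫⁻ ω, hullArea (insert (0, 1 - t) (Set.range ω)) ^ k ∂P n := by
  have hF : Measurable fun ω : Fin (n + 1) → ℝ × ℝ => hullArea (Set.range ω) ^ k :=
    (measurable_hullArea_range (n + 1)).pow_const k
  have hproj : ∀ u, μT {p | apexProj p = u} = 0 := fun u => by
    simpa [ae_iff] using ae_apexProj_ne u
  have hbeta : ∫⁻ u in Set.Ioo (0 : ℝ) 1, ENNReal.ofReal ((1 - u) ^ (n + k)) =
      ENNReal.ofReal (1 / (n + k + 1)) := by
    simpa using lintegral_Ioo_pow_mul_one_sub_pow 0 (n + k)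
  rw [hullMoment, P, lintegral_pi_range_eq_mul_lintegral_min μT (F := fun S => hullArea S ^ k) hF
    measurable_apexProj hproj, lintegral_μT (measurable_lintegral_pi_restrict_lt μT
      (F := fun S => hullArea S ^ k) hF measurable_apexProj), div_eq_mul_one_div,
    ENNReal.ofReal_mul (by positivity), mul_assoc, ← lintegral_const_mul' _ _ ENNReal.ofReal_ne_top]
  congr 1
  · exact_mod_cast (ENNReal.ofReal_natCast (n + 1)).symm
  refine setLIntegral_congr_fun measurableSet_Ioo fun t ht => ?_
  rw [mul_left_comm, ← hbeta, ← lintegral_mul_const _ (by fun_prop)]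
  congr 1
  refine setLIntegral_congr_fun measurableSet_Ioo fun u hu => ?_
  exact lintegral_hullArea_insert_right ht.1.ne' hu.1 hu.2 n k

lemma ofReal_mul_lintegral_hullArea_insert_left {t : ℝ} (h0 : 0 < t) (h1 : t < 1) (n k : ℕ) :
    ENNReal.ofReal (2 * t) * ∫⁻ ω, hullArea (insert (0, 1 - t) (Set.range ω)) ^ k ∂P n =
      ∑ m ∈ antidiagonal n, ∑ l ∈ antidiagonal k,
        ENNReal.ofReal (2 * (n.choose m.1 * k.choose l.1)) * hullMoment m.1 l.1 *
          ENNReal.ofReal (t ^ (m.2 + l.2 + 1) * (1 - t) ^ (m.1 + l.1)) := by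
  rw [lintegral_hullArea_insert_left (sub_pos.2 h1) (sub_lt_self 1 h0), Finset.mul_sum]
  refine Finset.sum_congr rfl fun m _ => ?_
  rw [Finset.mul_sum]
  refine Finset.sum_congr rfl fun l _ => ?_
  rw [sub_sub_cancel, ← ENNReal.ofReal_natCast, mul_right_comm _ (hullMoment _ _), ← mul_assoc,
    ← mul_assoc, ← ENNReal.ofReal_mul (by positivity), ← ENNReal.ofReal_mul (by positivity),
    ← ENNReal.ofReal_mul (by positivity)]
  congr 2
  push_cast
  ring

lemma setLIntegral_mul_lintegral_hullArea_insert_left (n k : ℕ) :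
    ∫⁻ t in Set.Ioo (0 : ℝ) 1, ENNReal.ofReal (2 * t) *
        ∫⁻ ω, hullArea (insert (0, 1 - t) (Set.range ω)) ^ k ∂P n =
      ∑ m ∈ antidiagonal n, ∑ l ∈ antidiagonal k, ENNReal.ofReal (2 / (n + k + 2) *
        (n.choose m.1 * k.choose l.1 / (n + k + 1).choose (m.1 + l.1))) * hullMoment m.1 l.1 := by
  rw [setLIntegral_congr_fun measurableSet_Ioo fun t ht =>
      ofReal_mul_lintegral_hullArea_insert_left ht.1 ht.2 n k,
    lintegral_finsetSum _ fun m _ => Finset.measurable_fun_sum _ fun l _ => by fun_prop]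
  refine Finset.sum_congr rfl fun m hm => ?_
  rw [lintegral_finsetSum _ fun l _ => by fun_prop]
  refine Finset.sum_congr rfl fun l hl => ?_
  have hexponents : m.2 + l.2 + 1 + (m.1 + l.1) = n + k + 1 := by
    linarith [mem_antidiagonal.1 hm, mem_antidiagonal.1 hl]
  rw [lintegral_const_mul _ (by fun_prop), lintegral_Ioo_pow_mul_one_sub_pow, mul_right_comm,
    ← ENNReal.ofReal_mul (by positivity), ← Nat.cast_add, hexponents]
  congr 2
  push_cast
  field_simp
  ring

lemma toReal_hullMoment_succ (n k : ℕ) :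
    (hullMoment (n + 1) k).toReal = 2 * (n + 1) / ((n + k + 1) * (n + k + 2)) *
      ∑ m ∈ antidiagonal n, ∑ l ∈ antidiagonal k,
        n.choose m.1 * k.choose l.1 / (n + k + 1).choose (m.1 + l.1) *
          (hullMoment m.1 l.1).toReal := by
  have hne : ∀ (r : ℝ) (m l : ℕ), ENNReal.ofReal r * hullMoment m l ≠ ⊤ := fun r m l =>
    ENNReal.mul_ne_top ENNReal.ofReal_ne_top (hullMoment_ne_top m l)
  rw [hullMoment_succ_eq_lintegral, setLIntegral_mul_lintegral_hullArea_insert_left,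
    ENNReal.toReal_mul, ENNReal.toReal_ofReal (by positivity),
    ENNReal.toReal_sum fun m _ => ENNReal.sum_ne_top.2 fun l _ => hne _ _ _, Finset.mul_sum,
    Finset.mul_sum]
  refine Finset.sum_congr rfl fun m _ => ?_
  rw [ENNReal.toReal_sum fun l _ => hne _ _ _, Finset.mul_sum, Finset.mul_sum]
  refine Finset.sum_congr rfl fun l _ => ?_
  rw [ENNReal.toReal_mul, ENNReal.toReal_ofReal (by positivity)]
  field_simp

end Moments

/-- recurrence for the moments `E[V_n^k]`, `n ≥ 1`, `k ≥ 0`. -/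
theorem stmt7 (n k : ℕ) (hn : 1 ≤ n) :
    ∫ ω, (V n ω) ^ k ∂ P n
      = 2 * (n : ℝ) / (((n : ℝ) + k) * ((n : ℝ) + k + 1)) *
        ∑ l ∈ Finset.range (k + 1), ∑ m ∈ Finset.range n,
          ((n - 1).choose m : ℝ) * (k.choose l : ℝ) / ((n + k).choose (m + l) : ℝ) *
            ∫ ω, (V m ω) ^ l ∂ P m := by
  obtain ⟨n, rfl⟩ := Nat.exists_eq_add_of_le' hn
  simp only [integral_V_pow, toReal_hullMoment_succ, Nat.add_sub_cancel,
    Finset.Nat.sum_antidiagonal_eq_sum_range_succ_mk]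
  rw [Finset.sum_comm, add_right_comm n 1 k]
  push_cast
  ring

end
end

section
/- For every integer k ≥ 0 one has E[V_2^k] = 4(k−3)/((k+1)(k+2)(k+3)) + 8·H_{k+2}/((k+1)(k+2)²), where H_{k+2} = Σ_{i=1}^{k+2} 1/i is the harmonic number. -/
open MeasureTheory

noncomputable section

/-
Twice the area of the hull of two points `p`, `q` below the line through `(1, 0)` and `(0, 1)` and
of these two corners is the largest signed area of the chains from corner to corner through some of
the points, a maximum of four polynomials. By symmetry `q` may be taken to lie to the left of `p`.
For fixed `p` and fixed first coordinate of `q`, as the second coordinate grows `q` first makes `p`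
redundant, then forms a convex chain with it, and finally becomes redundant itself, and the `k`-th
power is integrated on each of these pieces. Integrating the remaining coordinates one after another
produces the geometric sum `(1 - (1 - a) ^ (k + 2)) / a`, whose integral against
`(1 - a) ^ 2` over the first coordinate `a` of `p` is responsible for the harmonic number.
-/

section ConvexHull

variable {E : Type*} [AddCommGroup E] [Module ℝ E]

theorem segment_subset_union {x y o : E} (ho : o ∈ segment ℝ x y) :
    segment ℝ x y ⊆ segment ℝ x o ∪ segment ℝ o y := by
  intro u hu
  rw [segment_eq_image_lineMap] at ho
  rw [← insert_endpoints_openSegment] at hu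
  rcases hu with rfl | rfl | hu
  · exact Or.inl (left_mem_segment ℝ _ _)
  · exact Or.inr (right_mem_segment ℝ _ _)
  · rcases openSegment_subset_union x y (Set.image_subset_range _ _ ho) hu with rfl | hu | hu
    · exact Or.inl (right_mem_segment ℝ _ _)
    · exact Or.inl (openSegment_subset_segment ℝ _ _ hu)
    · exact Or.inr (openSegment_subset_segment ℝ _ _ hu)

theorem convexHull_insert_of_mem {s : Set E} {x : E} (h : x ∈ convexHull ℝ s) :
    convexHull ℝ (insert x s) = convexHull ℝ s :=
  (convexHull_min (Set.insert_subset h (subset_convexHull ℝ _))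
    (convex_convexHull ℝ _)).antisymm (convexHull_mono (Set.subset_insert _ _))

theorem convexHull_quadrilateral_eq_union {x y z w : E}
    (h : (segment ℝ x z ∩ segment ℝ y w).Nonempty) :
    convexHull ℝ {x, y, z, w} = convexHull ℝ {x, y, z} ∪ convexHull ℝ {x, z, w} := by
  refine Set.Subset.antisymm ?_ (Set.union_subset (convexHull_mono (by grind))
    (convexHull_mono (by grind)))
  obtain ⟨o, hoxz, hoyw⟩ := h
  rw [show ({x, y, z, w} : Set E) = {x, z, y, w} by grind, ← convexJoin_segments]
  intro u hu
  obtain ⟨r, hr, s, hs, hu⟩ := mem_convexJoin.1 hu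
  have segment_subset {a b : E} {t : Set E} (ha : a ∈ convexHull ℝ t) (hb : b ∈ convexHull ℝ t) :
      segment ℝ a b ⊆ convexHull ℝ t := (convex_convexHull ℝ t).segment_subset ha hb
  have vertex {a : E} {t : Set E} (ha : a ∈ t) : a ∈ convexHull ℝ t := subset_convexHull ℝ t ha
  have diagonal {t : Set E} (hx : x ∈ t) (hz : z ∈ t) : segment ℝ x z ⊆ convexHull ℝ t :=
    segment_subset (vertex hx) (vertex hz)
  rcases segment_subset_union hoyw hs with hs | hs
  · exact Or.inl (segment_subset (diagonal (by grind) (by grind) hr)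
      (segment_subset (vertex (by grind)) (diagonal (by grind) (by grind) hoxz) hs) hu)
  · exact Or.inr (segment_subset (diagonal (by grind) (by grind) hr)
      (segment_subset (diagonal (by grind) (by grind) hoxz) (vertex (by grind)) hs) hu)

end ConvexHull

section Hyperplane

variable {E : Type*} [NormedAddCommGroup E] [NormedSpace ℝ E] [MeasurableSpace E] [BorelSpace E]
  [FiniteDimensional ℝ E] (μ : Measure E) [μ.IsAddHaarMeasure]

theorem ae_linearMap_apply_ne {f : E →ₗ[ℝ] ℝ} (hf : f ≠ 0) (r : ℝ) : ∀ᵐ x ∂μ, f x ≠ r := by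
  obtain ⟨x₀, rfl⟩ := LinearMap.surjective hf r
  let S : AffineSubspace ℝ E := AffineSubspace.mk' x₀ (LinearMap.ker f)
  have hS : S ≠ ⊤ := by
    intro hS
    have : LinearMap.ker f = ⊤ := by
      rw [← AffineSubspace.direction_mk' x₀ (LinearMap.ker f),
        show AffineSubspace.mk' _ _ = ⊤ from hS, AffineSubspace.direction_top]
    exact hf (LinearMap.ker_eq_top.1 this)
  refine measure_mono_null (fun x hx ↦ ?_) (Measure.addHaar_affineSubspace μ S hS)
  have : f x = f x₀ := not_not.1 hx
  simp [S, AffineSubspace.mem_mk', this]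

theorem aedisjoint_of_linearMap_le_of_le {f : E →ₗ[ℝ] ℝ} (hf : f ≠ 0) {r : ℝ} {s t : Set E}
    (hs : ∀ x ∈ s, f x ≤ r) (ht : ∀ x ∈ t, r ≤ f x) : AEDisjoint μ s t :=
  measure_mono_null (fun _ hx ↦ not_not.2 ((hs _ hx.1).antisymm (ht _ hx.2)))
    (ae_linearMap_apply_ne μ hf r)

end Hyperplane

section Integration

theorem integral_sub_mul_pow (k : ℕ) (r : ℝ) {t : ℝ} (ht : t ≠ 0) (s e : ℝ) :
    ∫ x in s..e, (r - t * x) ^ k =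
      ((r - t * s) ^ (k + 1) - (r - t * e) ^ (k + 1)) / ((k + 1) * t) := by
  rw [intervalIntegral.integral_comp_sub_mul (fun x ↦ x ^ k) ht, integral_pow, smul_eq_mul,
    inv_mul_eq_div, div_div]

theorem integral_sub_pow (k : ℕ) (r s e : ℝ) :
    ∫ x in s..e, (r - x) ^ k = ((r - s) ^ (k + 1) - (r - e) ^ (k + 1)) / (k + 1) := by
  simpa only [one_mul, mul_one] using integral_sub_mul_pow k r one_ne_zero s e

theorem integral_zero_one_pow (k : ℕ) : ∫ x in (0 : ℝ)..1, x ^ k = 1 / (k + 1) := by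
  rw [integral_pow, one_pow, zero_pow k.succ_ne_zero, sub_zero]

theorem setIntegral_regionBetween_Ioo {f : ℝ × ℝ → ℝ} {g h : ℝ → ℝ} {s e : ℝ} (hse : s ≤ e)
    (hg : Measurable g) (hh : Measurable h) (hgh : ∀ x ∈ Set.Ioo s e, g x ≤ h x)
    (hf : IntegrableOn f (regionBetween g h (Set.Ioo s e))) :
    ∫ z in regionBetween g h (Set.Ioo s e), f z = ∫ x in s..e, ∫ y in g x..h x, f (x, y) := by
  have hmeas : MeasurableSet (regionBetween g h (Set.Ioo s e)) :=
    measurableSet_regionBetween hg hh measurableSet_Ioo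
  rw [← integral_indicator hmeas, Measure.volume_eq_prod,
    integral_prod _ ((integrable_indicator_iff hmeas).2 hf),
    intervalIntegral.integral_of_le hse, integral_Ioc_eq_integral_Ioo,
    ← integral_indicator measurableSet_Ioo]
  congr 1 with x
  by_cases hx : x ∈ Set.Ioo s e
  · rw [Set.indicator_of_mem hx, intervalIntegral.integral_of_le (hgh x hx),
      integral_Ioc_eq_integral_Ioo, ← integral_indicator measurableSet_Ioo]
    congr 1 with y
    simp only [Set.indicator_apply, regionBetween, Set.mem_ofPred_eq, hx, true_and]
  · rw [Set.indicator_of_notMem hx, ← integral_zero ℝ ℝ]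
    congr 1 with y
    exact Set.indicator_of_notMem (fun h ↦ hx h.1) _

theorem integrable_of_continuous_of_ae_mem_isCompact {X : Type*} [TopologicalSpace X] [T2Space X]
    [MeasurableSpace X] [OpensMeasurableSpace X] {μ : Measure X} [IsFiniteMeasure μ] {K : Set X}
    (hK : IsCompact K) (hμ : ∀ᵐ x ∂μ, x ∈ K) {f : X → ℝ} (hf : Continuous f) :
    Integrable f μ := by
  rw [← Measure.restrict_eq_self_of_ae_mem hμ]
  exact hf.continuousOn.integrableOn_compact hK

theorem integral_integral_eq_two_mul_of_symm {α : Type*} [MeasurableSpace α] {μ : Measure α}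
    [SFinite μ] {F : α → α → ℝ} (hF : Integrable (Function.uncurry F) (μ.prod μ))
    (hsymm : ∀ x y, F x y = F y x) {g : α → ℝ} (hg : Measurable g)
    (hg₀ : ∀ r, ∀ᵐ x ∂μ, g x ≠ r) :
    ∫ x, ∫ y, F x y ∂μ ∂μ = 2 * ∫ x, ∫ y in {y | g y < g x}, F x y ∂μ ∂μ := by
  let S : Set (α × α) := {z | g z.2 < g z.1}
  have hS : MeasurableSet S := measurableSet_lt (by fun_prop) (by fun_prop)
  have hcompl : (Sᶜ : Set (α × α)) =ᵐ[μ.prod μ] Prod.swap ⁻¹' S := by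
    have hne : ∀ᵐ z ∂μ.prod μ, g z.2 ≠ g z.1 :=
      (Measure.ae_prod_iff_ae_ae (p := fun z : α × α ↦ g z.2 ≠ g z.1)
        (measurableSet_eq_fun (by fun_prop) (by fun_prop)).compl).2
        (.of_forall fun x ↦ hg₀ (g x))
    filter_upwards [hne] with z hz
    exact propext (not_lt.trans (le_iff_lt_or_eq.trans (or_iff_left hz.symm)))
  have hswap : ∫ z in Sᶜ, Function.uncurry F z ∂μ.prod μ =
      ∫ z in S, Function.uncurry F z ∂μ.prod μ := by
    rw [setIntegral_congr_set hcompl,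
      ← Measure.measurePreserving_swap.setIntegral_preimage_emb
        MeasurableEquiv.prodComm.measurableEmbedding (Function.uncurry F) S]
    simp only [Function.uncurry_def, Prod.fst_swap, Prod.snd_swap, hsymm]
  calc ∫ x, ∫ y, F x y ∂μ ∂μ
    _ = ∫ z, Function.uncurry F z ∂μ.prod μ := (integral_prod _ hF).symm
    _ = 2 * ∫ z in S, Function.uncurry F z ∂μ.prod μ := by
      rw [← integral_add_compl hS hF, hswap, two_mul]
    _ = 2 * ∫ x, ∫ y in {y | g y < g x}, F x y ∂μ ∂μ := by
      rw [← integral_indicator hS, integral_prod _ (hF.indicator hS)]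
      simp only [← integral_indicator (measurableSet_lt hg measurable_const)]
      rfl

end Integration

section HarmonicNumbers

theorem H_succ (n : ℕ) : H (n + 1) = H n + 1 / (n + 1) :=
  Finset.sum_range_succ _ n

theorem sum_range_one_div_add_three (n : ℕ) :
    ∑ i ∈ Finset.range n, 1 / ((i : ℝ) + 3) = H (n + 2) - 3 / 2 := by
  rw [H, Finset.sum_range_succ', Finset.sum_range_succ']
  push_cast
  norm_num [add_assoc]

theorem integral_zero_one_sum_pow_add_two (n : ℕ) :
    ∫ x in (0 : ℝ)..1, ∑ i ∈ Finset.range n, x ^ (i + 2) = H (n + 2) - 3 / 2 := by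
  rw [intervalIntegral.integral_finsetSum fun i _ ↦ (continuous_pow _).intervalIntegrable _ _,
    ← sum_range_one_div_add_three]
  refine Finset.sum_congr rfl fun i _ ↦ ?_
  rw [integral_zero_one_pow]
  push_cast
  ring

end HarmonicNumbers

section PlaneGeometry

variable {x y z w u : ℝ × ℝ}

/-- The determinant of `(y - x, z - x)`: twice the signed area of the triangle `x y z`, positive
when the vertices are listed counterclockwise. -/
def orientDet (x y z : ℝ × ℝ) : ℝ := (y.1 - x.1) * (z.2 - x.2) - (y.2 - x.2) * (z.1 - x.1)

theorem mem_convexHull_triangle_of_orientDet (hxyz : 0 < orientDet x y z)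
    (hxyu : 0 ≤ orientDet x y u) (hyzu : 0 ≤ orientDet y z u) (hzxu : 0 ≤ orientDet z x u) :
    u ∈ convexHull ℝ {x, y, z} := by
  have vertex {a : ℝ × ℝ} (ha : a ∈ ({x, y, z} : Set (ℝ × ℝ))) : a ∈ convexHull ℝ {x, y, z} :=
    subset_convexHull ℝ _ ha
  have hsum : orientDet y z u + orientDet z x u + orientDet x y u = orientDet x y z := by
    simp only [orientDet]; ring
  have := (convex_convexHull ℝ {x, y, z}).sum_mem (t := Finset.univ)
    (w := ![orientDet y z u / orientDet x y z, orientDet z x u / orientDet x y z,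
      orientDet x y u / orientDet x y z]) (z := ![x, y, z])
    (by simp [Fin.forall_fin_succ, div_nonneg, *, hxyz.le])
    (by simp [Fin.sum_univ_three, ← add_div, hsum, hxyz.ne'])
    (by simp [Fin.forall_fin_succ, vertex])
  convert this using 1
  simp only [Fin.sum_univ_three, Matrix.cons_val]
  ext <;> simp only [Prod.fst_add, Prod.snd_add, Prod.smul_fst, Prod.smul_snd, smul_eq_mul] <;>
    field_simp <;> simp only [orientDet] <;> ring

theorem segment_inter_segment_nonempty_of_orientDet (hxyz : 0 < orientDet x y z)
    (hxyw : 0 ≤ orientDet x y w) (hxzw : 0 ≤ orientDet x z w) (hyzw : 0 ≤ orientDet y z w) :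
    (segment ℝ x z ∩ segment ℝ y w).Nonempty := by
  have hsum : orientDet x y z + orientDet x z w = orientDet x y w + orientDet y z w := by
    simp only [orientDet]; ring
  have hpos : 0 < orientDet x y z + orientDet x z w := by positivity
  refine ⟨(orientDet y z w / (orientDet x y w + orientDet y z w)) • x +
    (orientDet x y w / (orientDet x y w + orientDet y z w)) • z,
    ⟨_, _, ?_, ?_, ?_, rfl⟩, ⟨orientDet x z w / (orientDet x y z + orientDet x z w),
      orientDet x y z / (orientDet x y z + orientDet x z w), ?_, ?_, ?_, ?_⟩⟩
  any_goals positivity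
  · rw [← add_div, add_comm (orientDet y z w), div_self (hsum ▸ hpos.ne')]
  · rw [← add_div, add_comm (orientDet x z w), div_self hpos.ne']
  · rw [← hsum]
    ext <;> simp only [Prod.fst_add, Prod.snd_add, Prod.smul_fst, Prod.smul_snd, smul_eq_mul] <;>
      field_simp <;> simp only [orientDet] <;> ring

theorem T_eq_setOf : T = {z : ℝ × ℝ | 0 ≤ z.1 ∧ 0 ≤ z.2 ∧ z.1 + z.2 ≤ 1} := by
  refine Set.Subset.antisymm (convexHull_min (by simp [Set.insert_subset_iff]) ?_) ?_
  · have h₁ := convex_halfSpace_ge (LinearMap.fst ℝ ℝ ℝ).isLinear 0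
    have h₂ := convex_halfSpace_ge (LinearMap.snd ℝ ℝ ℝ).isLinear 0
    have h₃ := convex_halfSpace_le (LinearMap.fst ℝ ℝ ℝ + LinearMap.snd ℝ ℝ ℝ).isLinear 1
    exact h₁.inter (h₂.inter h₃)
  · rintro z ⟨h₁, h₂, h₃⟩
    apply mem_convexHull_triangle_of_orientDet <;> simp only [orientDet] <;> linarith

theorem T_ae_eq_regionBetween :
    T =ᵐ[volume] regionBetween (fun _ ↦ 0) (fun x ↦ 1 - x) (Set.Ioo 0 1) := by
  have hne {f : ℝ × ℝ →ₗ[ℝ] ℝ} (v : ℝ × ℝ) (hv : f v ≠ 0) (r : ℝ) : ∀ᵐ z, f z ≠ r :=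
    ae_linearMap_apply_ne volume (fun hf ↦ hv (by simp [hf])) r
  filter_upwards [hne (f := LinearMap.fst ℝ ℝ ℝ) (1, 0) (by simp) 0,
    hne (f := LinearMap.snd ℝ ℝ ℝ) (0, 1) (by simp) 0,
    hne (f := LinearMap.fst ℝ ℝ ℝ + LinearMap.snd ℝ ℝ ℝ) (1, 0) (by simp) 1] with z h₁ h₂ h₃
  rw [T_eq_setOf]
  simp only [LinearMap.fst_apply, LinearMap.snd_apply, LinearMap.add_apply] at h₁ h₂ h₃
  refine propext (show (_ ∧ _ ∧ _) ↔ (_ ∧ _) ∧ _ ∧ _ from ?_)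
  grind

theorem volume_T : volume T = ENNReal.ofReal (1 / 2) := by
  have hint {f : ℝ → ℝ} (hf : Continuous f) : IntegrableOn f (Set.Ioo 0 1) :=
    hf.integrableOn_Icc.mono_set Set.Ioo_subset_Icc_self
  rw [measure_congr T_ae_eq_regionBetween, Measure.volume_eq_prod,
    volume_regionBetween_eq_integral (hint (by fun_prop)) (hint (by fun_prop)) measurableSet_Ioo
      (fun x hx ↦ sub_nonneg.2 hx.2.le), ← integral_Ioc_eq_integral_Ioo,
    ← intervalIntegral.integral_of_le zero_le_one]
  simp only [Pi.sub_apply, sub_zero]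
  rw [intervalIntegral.integral_sub (by simp) (by simp)]
  norm_num

open scoped Pointwise in
theorem volume_convexHull_triangle (x y z : ℝ × ℝ) :
    volume (convexHull ℝ {x, y, z}) = ENNReal.ofReal (|orientDet x y z| / 2) := by
  let L : ℝ × ℝ →ₗ[ℝ] ℝ × ℝ := Matrix.toLin (.finTwoProd ℝ) (.finTwoProd ℝ)
    !![y.1 - x.1, z.1 - x.1; y.2 - x.2, z.2 - x.2]
  have hL (u : ℝ × ℝ) : L u = _ := Matrix.toLin_finTwoProd_apply _ _ _ _ u
  have hdet : LinearMap.det L = orientDet x y z := by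
    rw [LinearMap.det_toLin, Matrix.det_fin_two_of, orientDet, mul_comm (z.1 - x.1)]
  have hvertices : x + L (0, 0) = x ∧ x + L (1, 0) = y ∧ x + L (0, 1) = z := by
    simp [hL, Prod.ext_iff]
  have himage : convexHull ℝ {x, y, z} = x +ᵥ L '' T := by
    rw [T, L.image_convexHull, ← convexHull_vadd, ← Set.image_vadd]
    simp only [Set.image_insert_eq, Set.image_singleton, vadd_eq_add, hvertices]
  rw [himage, measure_vadd, Measure.addHaar_image_linearMap, hdet, volume_T,
    ← ENNReal.ofReal_mul (abs_nonneg _), mul_one_div]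

theorem volume_convexHull_quadrilateral (hxyz : 0 < orientDet x y z) (hxyw : 0 ≤ orientDet x y w)
    (hxzw : 0 ≤ orientDet x z w) (hyzw : 0 ≤ orientDet y z w) :
    volume (convexHull ℝ {x, y, z, w}) =
      ENNReal.ofReal ((orientDet x y z + orientDet x z w) / 2) := by
  let f : ℝ × ℝ →ₗ[ℝ] ℝ :=
    (z.1 - x.1) • LinearMap.snd ℝ ℝ ℝ - (z.2 - x.2) • LinearMap.fst ℝ ℝ ℝ
  have hf (u : ℝ × ℝ) : f u = f x + orientDet x z u := by
    simp only [f, orientDet, LinearMap.sub_apply, LinearMap.smul_apply, LinearMap.fst_apply,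
      LinearMap.snd_apply, smul_eq_mul]
    ring
  have hy : f y < f x := by
    rw [hf y]; simp only [orientDet] at hxyz ⊢; linarith
  have hz : f z = f x := by rw [hf z, orientDet]; ring
  have hf₀ : f ≠ 0 := by rintro h; simp [h] at hy
  have hle : convexHull ℝ {x, y, z} ⊆ {u | f u ≤ f x} :=
    convexHull_min (by simp [Set.insert_subset_iff, hy.le, hz]) (convex_halfSpace_le f.isLinear _)
  have hge : convexHull ℝ {x, z, w} ⊆ {u | f x ≤ f u} :=
    convexHull_min (by simp [Set.insert_subset_iff, hz, hf w, hxzw])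
      (convex_halfSpace_ge f.isLinear _)
  have hdisj : AEDisjoint volume (convexHull ℝ {x, y, z}) (convexHull ℝ {x, z, w}) :=
    aedisjoint_of_linearMap_le_of_le volume hf₀ hle hge
  have hmeas : MeasurableSet (convexHull ℝ {x, z, w}) :=
    ((Set.toFinite _).isClosed_convexHull ℝ).measurableSet
  rw [convexHull_quadrilateral_eq_union
      (segment_inter_segment_nonempty_of_orientDet hxyz hxyw hxzw hyzw),
    measure_union₀ hmeas.nullMeasurableSet hdisj, volume_convexHull_triangle,
    volume_convexHull_triangle, ← ENNReal.ofReal_add (by positivity) (by positivity),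
    abs_of_pos hxyz, abs_of_nonneg hxzw, add_div]

end PlaneGeometry

section ChainArea

variable {p q : ℝ × ℝ}

/-- Twice the area of the convex hull of `p`, `q`, `(1, 0)` and `(0, 1)`, for `p` and `q` below the
line through the last two points. The four terms are twice the signed areas of the
polygons from `(1, 0)` to `(0, 1)` through `p` only, `q` only, `p` then `q`, and `q` then `p`. -/
def chainArea (p q : ℝ × ℝ) : ℝ :=
  max (max (1 - p.1 - p.2) (1 - q.1 - q.2))
    (max ((1 - p.2) * (1 - q.1) - p.1 * q.2) ((1 - q.2) * (1 - p.1) - q.1 * p.2))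

theorem chainArea_comm (p q : ℝ × ℝ) : chainArea p q = chainArea q p := by
  rw [chainArea, chainArea, max_comm (1 - p.1 - p.2), max_comm ((1 - p.2) * (1 - q.1) - p.1 * q.2)]

theorem continuous_chainArea : Continuous (Function.uncurry chainArea) := by
  simp only [Function.uncurry_def, chainArea]
  fun_prop

theorem chainArea_eq_of_fst_dominated (h₁ : orientDet (1, 0) q p ≤ 0)
    (h₂ : 0 ≤ orientDet (0, 1) q p) : chainArea p q = 1 - q.1 - q.2 := by
  simp only [orientDet, chainArea] at *
  grind

theorem chainArea_eq_of_snd_dominated (h₁ : 0 ≤ orientDet (1, 0) q p)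
    (h₂ : orientDet (0, 1) q p ≤ 0) : chainArea p q = 1 - p.1 - p.2 := by
  simp only [orientDet, chainArea] at *
  grind

theorem chainArea_eq_of_convex (h₁ : 0 ≤ orientDet (1, 0) q p)
    (h₂ : 0 ≤ orientDet (0, 1) q p) :
    chainArea p q = (1 - p.2) * (1 - q.1) - p.1 * q.2 := by
  simp only [orientDet, chainArea] at *
  grind

theorem two_mul_volume_convexHull_of_orientDet_nonneg (hp : p.1 + p.2 < 1) (hq : q.1 + q.2 < 1)
    (h : 0 ≤ orientDet (0, 1) q p) :
    2 * (volume (convexHull ℝ {p, q, (1, 0), (0, 1)})).toReal = chainArea p q := by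
  have hp' : 0 < orientDet (1, 0) (0, 1) p := by simp only [orientDet]; linarith
  have hq' : 0 < orientDet (1, 0) (0, 1) q := by simp only [orientDet]; linarith
  rcases le_total 0 (orientDet (1, 0) q p) with hA | hA
  · rw [show ({p, q, (1, 0), (0, 1)} : Set (ℝ × ℝ)) = {(1, 0), (0, 1), q, p} by grind,
      volume_convexHull_quadrilateral hq' hp'.le hA h, ENNReal.toReal_ofReal (by positivity),
      chainArea_eq_of_convex hA h]
    simp only [orientDet]
    ring
  · have hmem : p ∈ convexHull ℝ {q, (1, 0), (0, 1)} := by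
      apply mem_convexHull_triangle_of_orientDet <;> simp only [orientDet] at * <;> linarith
    rw [convexHull_insert_of_mem hmem, volume_convexHull_triangle,
      ENNReal.toReal_ofReal (by positivity), chainArea_eq_of_fst_dominated hA h,
      show orientDet q (1, 0) (0, 1) = 1 - q.1 - q.2 by simp only [orientDet]; ring,
      abs_of_pos (by linarith)]
    ring

theorem two_mul_volume_convexHull_eq_chainArea (hp : p.1 + p.2 < 1) (hq : q.1 + q.2 < 1) :
    2 * (volume (convexHull ℝ {p, q, (1, 0), (0, 1)})).toReal = chainArea p q := by
  rcases le_total 0 (orientDet (0, 1) q p) with h | h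
  · exact two_mul_volume_convexHull_of_orientDet_nonneg hp hq h
  · rw [Set.insert_comm, chainArea_comm]
    refine two_mul_volume_convexHull_of_orientDet_nonneg hq hp ?_
    simp only [orientDet] at *
    linarith

theorem V_two_eq_chainArea {ω : Fin 2 → ℝ × ℝ} (h₀ : (ω 0).1 + (ω 0).2 < 1)
    (h₁ : (ω 1).1 + (ω 1).2 < 1) : V 2 ω = chainArea (ω 0) (ω 1) := by
  have hvertices : Set.range ω ∪ {(1, 0), (0, 1)} = {ω 0, ω 1, (1, 0), (0, 1)} := by
    ext z
    simp only [Set.mem_union, Set.mem_range, Fin.exists_fin_two, Set.mem_insert_iff,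
      Set.mem_singleton_iff, or_assoc, eq_comm (b := z)]
  rw [V, Tchain, hvertices, two_mul_volume_convexHull_eq_chainArea h₀ h₁]

end ChainArea

section UniformTriangle

instance : IsFiniteMeasure μT := by
  refine ⟨?_⟩
  rw [μT, Measure.smul_apply, Measure.restrict_apply_univ, volume_T, smul_eq_mul]
  exact ENNReal.mul_lt_top ENNReal.ofNat_lt_top ENNReal.ofReal_lt_top

theorem μT_restrict_fst_lt {s : ℝ} (hs : s ≤ 1) :
    μT.restrict {z | z.1 < s} = (2 : ENNReal) •
      volume.restrict (regionBetween (fun _ ↦ 0) (fun x ↦ 1 - x) (Set.Ioo 0 s)) := by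
  rw [μT, Measure.restrict_smul, Measure.restrict_congr_set T_ae_eq_regionBetween,
    Measure.restrict_restrict (measurableSet_lt measurable_fst measurable_const)]
  congr 2
  ext z
  simp only [regionBetween, Set.mem_inter_iff, Set.mem_ofPred_eq, Set.mem_Ioo]
  grind

theorem ae_μT_mem_regionBetween :
    ∀ᵐ z ∂μT, z ∈ regionBetween (fun _ ↦ 0) (fun x ↦ 1 - x) (Set.Ioo 0 1) := by
  rw [μT, Measure.restrict_congr_set T_ae_eq_regionBetween]
  exact Measure.ae_smul_measure (ae_restrict_mem
    (measurableSet_regionBetween (by fun_prop) (by fun_prop) measurableSet_Ioo)) _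

theorem ae_μT_fst_ne (r : ℝ) : ∀ᵐ z ∂μT, z.1 ≠ r :=
  Measure.ae_smul_measure (ae_restrict_of_ae (ae_linearMap_apply_ne volume
    (f := LinearMap.fst ℝ ℝ ℝ) (fun h ↦ by simpa using LinearMap.congr_fun h (1, 0)) r)) _

theorem isCompact_T : IsCompact T := (Set.toFinite _).isCompact_convexHull ℝ

theorem ae_μT_mem_T : ∀ᵐ z ∂μT, z ∈ T :=
  Measure.ae_smul_measure (ae_restrict_mem isCompact_T.measurableSet) _

theorem integrable_μT_of_continuous {f : ℝ × ℝ → ℝ} (hf : Continuous f) : Integrable f μT :=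
  integrable_of_continuous_of_ae_mem_isCompact isCompact_T ae_μT_mem_T hf

theorem integrable_μT_prod_of_continuous {f : (ℝ × ℝ) × ℝ × ℝ → ℝ} (hf : Continuous f) :
    Integrable f (μT.prod μT) := by
  refine integrable_of_continuous_of_ae_mem_isCompact (isCompact_T.prod isCompact_T) ?_ hf
  filter_upwards [Measure.quasiMeasurePreserving_fst.ae ae_μT_mem_T,
    Measure.quasiMeasurePreserving_snd.ae ae_μT_mem_T] with z h₁ h₂ using ⟨h₁, h₂⟩

theorem setIntegral_μT_fst_lt {f : ℝ × ℝ → ℝ} (hf : Integrable f μT) {s : ℝ} (hs₀ : 0 ≤ s)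
    (hs₁ : s ≤ 1) :
    ∫ z in {z | z.1 < s}, f z ∂μT = 2 * ∫ x in 0..s, ∫ y in 0..1 - x, f (x, y) := by
  have hfs := hf.integrableOn (s := {z | z.1 < s})
  rw [IntegrableOn, μT_restrict_fst_lt hs₁,
    integrable_smul_measure two_ne_zero ENNReal.ofNat_ne_top] at hfs
  rw [μT_restrict_fst_lt hs₁, integral_smul_measure, setIntegral_regionBetween_Ioo hs₀
    (by fun_prop) (by fun_prop) (fun x hx ↦ by linarith [hx.2]) hfs]
  simp

theorem integral_μT {f : ℝ × ℝ → ℝ} (hf : Integrable f μT) :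
    ∫ z, f z ∂μT = 2 * ∫ x in 0..1, ∫ y in 0..1 - x, f (x, y) := by
  rw [← setIntegral_μT_fst_lt hf zero_le_one le_rfl, Measure.restrict_eq_self_of_ae_mem]
  filter_upwards [ae_μT_mem_regionBetween] with z hz using hz.1.2

end UniformTriangle

section Moments

theorem integral_V_two_pow (k : ℕ) :
    ∫ ω, V 2 ω ^ k ∂P 2 = ∫ p, ∫ q, chainArea p q ^ k ∂μT ∂μT := by
  have hbelow (i : Fin 2) : ∀ᵐ ω ∂P 2, (ω i).1 + (ω i).2 < 1 := by
    refine (Measure.quasiMeasurePreserving_eval (fun _ : Fin 2 ↦ μT) i).ae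
      (p := fun z : ℝ × ℝ ↦ z.1 + z.2 < 1) ?_
    filter_upwards [ae_μT_mem_regionBetween] with z hz using by linarith [hz.2.2]
  have hV : (fun ω ↦ V 2 ω ^ k) =ᵐ[P 2] fun ω ↦ chainArea (ω 0) (ω 1) ^ k := by
    filter_upwards [hbelow 0, hbelow 1] with ω h₀ h₁
    rw [V_two_eq_chainArea h₀ h₁]
  calc ∫ ω, V 2 ω ^ k ∂P 2
    _ = ∫ ω, chainArea (ω 0) (ω 1) ^ k ∂P 2 := integral_congr_ae hV
    _ = ∫ z, chainArea z.1 z.2 ^ k ∂μT.prod μT :=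
      (measurePreserving_finTwoArrow μT).integral_comp' (fun z ↦ chainArea z.1 z.2 ^ k)
    _ = ∫ p, ∫ q, chainArea p q ^ k ∂μT ∂μT :=
      integral_prod _ (integrable_μT_prod_of_continuous (continuous_chainArea.pow k))

theorem integral_V_two_pow_eq_iterated (k : ℕ) :
    ∫ ω, V 2 ω ^ k ∂P 2 = 8 * ∫ a in 0..1, ∫ b in 0..1 - a, ∫ c in 0..a, ∫ d in 0..1 - c,
      chainArea (a, b) (c, d) ^ k := by
  have hcont : Continuous fun z : (ℝ × ℝ) × ℝ × ℝ ↦ chainArea z.1 z.2 ^ k :=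
    continuous_chainArea.pow k
  have hinner {p : ℝ × ℝ} (h₀ : 0 ≤ p.1) (h₁ : p.1 ≤ 1) :
      ∫ q in {q | q.1 < p.1}, chainArea p q ^ k ∂μT =
        2 * ∫ c in 0..p.1, ∫ d in 0..1 - c, chainArea p (c, d) ^ k :=
    setIntegral_μT_fst_lt (integrable_μT_of_continuous (hcont.comp (.prodMk_right p))) h₀ h₁
  have hinner_cont : Continuous fun p : ℝ × ℝ ↦
      ∫ c in 0..p.1, ∫ d in 0..1 - c, chainArea p (c, d) ^ k := by
    refine intervalIntegral.continuous_parametric_intervalIntegral_of_continuous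
      (f := fun p c ↦ ∫ d in 0..1 - c, chainArea p (c, d) ^ k) ?_ continuous_fst
    refine intervalIntegral.continuous_parametric_intervalIntegral_of_continuous
      (f := fun (z : (ℝ × ℝ) × ℝ) d ↦ chainArea z.1 (z.2, d) ^ k) ?_ (by fun_prop)
    exact hcont.comp (by fun_prop : Continuous fun z : ((ℝ × ℝ) × ℝ) × ℝ ↦ (z.1.1, z.1.2, z.2))
  calc ∫ ω, V 2 ω ^ k ∂P 2
    _ = 2 * ∫ p, ∫ q in {q | q.1 < p.1}, chainArea p q ^ k ∂μT ∂μT := by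
      rw [integral_V_two_pow]
      exact integral_integral_eq_two_mul_of_symm (F := fun p q ↦ chainArea p q ^ k)
        (integrable_μT_prod_of_continuous hcont) (fun p q ↦ by rw [chainArea_comm])
        measurable_fst ae_μT_fst_ne
    _ = 2 * ∫ p, 2 * (∫ c in 0..p.1, ∫ d in 0..1 - c, chainArea p (c, d) ^ k) ∂μT := by
      congr 1
      refine integral_congr_ae ?_
      filter_upwards [ae_μT_mem_regionBetween] with p hp using hinner hp.1.1.le hp.1.2.le
    _ = 8 * ∫ a in 0..1, ∫ b in 0..1 - a, ∫ c in 0..a, ∫ d in 0..1 - c,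
        chainArea (a, b) (c, d) ^ k := by
      rw [integral_const_mul, integral_μT (integrable_μT_of_continuous hinner_cont)]
      ring

variable {a b c : ℝ}

theorem integral_chainArea_pow_eq_add_add (k : ℕ) {l m : ℝ} (ha₀ : 0 ≤ a) (ha₁ : a ≤ 1)
    (hl₀ : 0 ≤ l) (hlm : l ≤ m) (hm₁ : m ≤ 1 - c) (hl : l * (1 - a) = b * (1 - c))
    (hm : a * (1 - m) = c * (1 - b)) :
    ∫ d in 0..1 - c, chainArea (a, b) (c, d) ^ k =
      (∫ d in 0..l, (1 - c - d) ^ k) + (∫ d in l..m, ((1 - b) * (1 - c) - a * d) ^ k) +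
        ∫ _ in m..1 - c, (1 - a - b) ^ k := by
  have hdet₁ (d : ℝ) : orientDet (1, 0) (c, d) (a, b) = (d - l) * (1 - a) := by
    simp only [orientDet]; linear_combination hl
  have hdet₂ (d : ℝ) : orientDet (0, 1) (c, d) (a, b) = (m - d) * a := by
    simp only [orientDet]; linear_combination hm
  have hfst : ∫ d in 0..l, chainArea (a, b) (c, d) ^ k = ∫ d in 0..l, (1 - c - d) ^ k := by
    refine intervalIntegral.integral_congr_Ioo_of_le hl₀ fun d hd ↦ ?_
    rw [chainArea_eq_of_fst_dominated]
    · exact hdet₁ d ▸ mul_nonpos_of_nonpos_of_nonneg (by linarith [hd.2]) (by linarith)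
    · exact hdet₂ d ▸ mul_nonneg (by linarith [hd.2]) ha₀
  have hconvex : ∫ d in l..m, chainArea (a, b) (c, d) ^ k =
      ∫ d in l..m, ((1 - b) * (1 - c) - a * d) ^ k := by
    refine intervalIntegral.integral_congr_Ioo_of_le hlm fun d hd ↦ ?_
    rw [chainArea_eq_of_convex]
    · exact hdet₁ d ▸ mul_nonneg (by linarith [hd.1]) (by linarith)
    · exact hdet₂ d ▸ mul_nonneg (by linarith [hd.2]) ha₀
  have hsnd : ∫ d in m..1 - c, chainArea (a, b) (c, d) ^ k =
      ∫ _ in m..1 - c, (1 - a - b) ^ k := by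
    refine intervalIntegral.integral_congr_Ioo_of_le hm₁ fun d hd ↦ ?_
    rw [chainArea_eq_of_snd_dominated]
    · exact hdet₁ d ▸ mul_nonneg (by linarith [hd.1]) (by linarith)
    · exact hdet₂ d ▸ mul_nonpos_of_nonpos_of_nonneg (by linarith [hd.1]) ha₀
  have hint (s e : ℝ) :
      IntervalIntegrable (fun d ↦ chainArea (a, b) (c, d) ^ k) volume s e :=
    ((continuous_chainArea.pow k).comp
      (by fun_prop : Continuous fun d ↦ ((a, b), c, d))).intervalIntegrable s e
  rw [← intervalIntegral.integral_add_adjacent_intervals (hint 0 m) (hint m _),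
    ← intervalIntegral.integral_add_adjacent_intervals (hint 0 l) (hint l m), hfst, hconvex, hsnd]

theorem integral_chainArea_pow (k : ℕ) (hc : 0 < c) (hca : c < a) (ha : a < 1) (hb : 0 ≤ b)
    (hab : a + b ≤ 1) :
    ∫ d in 0..1 - c, chainArea (a, b) (c, d) ^ k =
      ((1 + (1 - a - b) ^ (k + 1) / (a * (1 - a) ^ k)) * (1 - c) ^ (k + 1) +
        (1 - a - b) ^ (k + 1) / a * ((k + 1) * c - 1)) / (k + 1) := by
  have ha₀ : 0 < a := hc.trans hca
  have ha₁ : 0 < 1 - a := sub_pos.2 ha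
  have hc₁ : 0 < 1 - c := by linarith
  have hs : 0 ≤ 1 - a - b := by linarith
  -- The heights at abscissa `c` of the lines through `(a, b)` and `(1, 0)`, respectively `(0, 1)`.
  set l := b * (1 - c) / (1 - a) with hl
  set m := 1 - c * (1 - b) / a with hm
  have hl₁ : 1 - c - l = (1 - c) * (1 - a - b) / (1 - a) := by rw [hl]; field_simp
  have hm₁ : 1 - c - m = c * (1 - a - b) / a := by rw [hm]; field_simp; ring
  have hlm : m - l = (a - c) * (1 - a - b) / (a * (1 - a)) := by rw [hl, hm]; field_simp; ring
  have hlm₀ : 0 ≤ m - l := hlm ▸ by have := sub_pos.2 hca; positivity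
  have hm₁₀ : 0 ≤ 1 - c - m := hm₁ ▸ by positivity
  have hconvex_l : (1 - b) * (1 - c) - a * l = (1 - c) * (1 - a - b) / (1 - a) := by
    rw [hl]; field_simp; ring
  have hconvex_m : (1 - b) * (1 - c) - a * m = 1 - a - b := by rw [hm]; field_simp; ring
  rw [integral_chainArea_pow_eq_add_add k ha₀.le ha.le (by positivity) (sub_nonneg.1 hlm₀)
      (sub_nonneg.1 hm₁₀) (by rw [hl]; field_simp) (by rw [hm]; field_simp; ring),
    integral_sub_pow, integral_sub_mul_pow _ _ ha₀.ne', intervalIntegral.integral_const, hl₁, hm₁,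
    hconvex_l, hconvex_m, sub_zero, smul_eq_mul, div_pow, mul_pow]
  field_simp
  ring

theorem integral_integral_chainArea_pow (k : ℕ) (ha₀ : 0 < a) (ha : a < 1) (hb : 0 ≤ b)
    (hab : a + b ≤ 1) :
    ∫ c in 0..a, ∫ d in 0..1 - c, chainArea (a, b) (c, d) ^ k =
      ((1 - (1 - a) ^ (k + 2)) / (k + 2) + (1 - a - b) ^ (k + 1) *
        ((1 - (1 - a) ^ (k + 2)) / ((k + 2) * a * (1 - a) ^ k) + (k + 1) * a / 2 - 1)) /
          (k + 1) := by
  rw [intervalIntegral.integral_congr_Ioo_of_le ha₀.le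
      fun c hc ↦ integral_chainArea_pow k hc.1 hc.2 ha hb hab,
    intervalIntegral.integral_div, intervalIntegral.integral_add
      (Continuous.intervalIntegrable (by fun_prop) _ _)
      (Continuous.intervalIntegrable (by fun_prop) _ _),
    intervalIntegral.integral_const_mul, intervalIntegral.integral_const_mul,
    intervalIntegral.integral_sub (Continuous.intervalIntegrable (by fun_prop) _ _)
      (Continuous.intervalIntegrable (by fun_prop) _ _),
    intervalIntegral.integral_const_mul, integral_sub_pow, integral_id,
    intervalIntegral.integral_const]
  have : 0 < 1 - a := sub_pos.2 ha
  push_cast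
  simp only [smul_eq_mul]
  field_simp
  ring

theorem integral_integral_integral_chainArea_pow (k : ℕ) (ha₀ : 0 < a) (ha : a < 1) :
    ∫ b in 0..1 - a, ∫ c in 0..a, ∫ d in 0..1 - c, chainArea (a, b) (c, d) ^ k =
      ((1 - a) - (1 - a) ^ (k + 3) + (k + 1) / 2 * ((1 - a) ^ (k + 2) - (1 - a) ^ (k + 3)) -
        (1 - a) ^ (k + 2) + (∑ i ∈ Finset.range (k + 2), (1 - a) ^ (i + 2)) / (k + 2)) /
          ((k + 1) * (k + 2)) := by
  have hgeom : ∑ i ∈ Finset.range (k + 2), (1 - a) ^ (i + 2) =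
      (1 - (1 - a) ^ (k + 2)) / a * (1 - a) ^ 2 := by
    rw [← geom_sum_mul_neg, sub_sub_cancel, mul_div_cancel_right₀ _ ha₀.ne', Finset.sum_mul]
    exact Finset.sum_congr rfl fun i _ ↦ pow_add _ _ _
  have ha₁ : 0 < 1 - a := sub_pos.2 ha
  rw [intervalIntegral.integral_congr_Ioo_of_le ha₁.le
      fun b hb ↦ integral_integral_chainArea_pow k ha₀ ha hb.1.le (by linarith [hb.2]),
    intervalIntegral.integral_div, intervalIntegral.integral_add
      (Continuous.intervalIntegrable (by fun_prop) _ _)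
      (Continuous.intervalIntegrable (by fun_prop) _ _),
    intervalIntegral.integral_mul_const, integral_sub_pow, intervalIntegral.integral_const, hgeom]
  push_cast
  simp only [smul_eq_mul, sub_self]
  field_simp
  ring

theorem iteratedIntegral_chainArea_pow (k : ℕ) :
    ∫ a in 0..1, ∫ b in 0..1 - a, ∫ c in 0..a, ∫ d in 0..1 - c, chainArea (a, b) (c, d) ^ k =
      (1 / 2 - 1 / (k + 4) + (k + 1) / 2 * (1 / (k + 3) - 1 / (k + 4)) - 1 / (k + 3) +
        (H (k + 4) - 3 / 2) / (k + 2)) / ((k + 1) * (k + 2)) := by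
  let f (v : ℝ) : ℝ := (v - v ^ (k + 3) + (k + 1) / 2 * (v ^ (k + 2) - v ^ (k + 3)) -
    v ^ (k + 2) + (∑ i ∈ Finset.range (k + 2), v ^ (i + 2)) / (k + 2)) / ((k + 1) * (k + 2))
  have hint {g : ℝ → ℝ} (hg : Continuous g) : IntervalIntegrable g volume 0 1 :=
    hg.intervalIntegrable 0 1
  calc ∫ a in 0..1, ∫ b in 0..1 - a, ∫ c in 0..a, ∫ d in 0..1 - c, chainArea (a, b) (c, d) ^ k
    _ = ∫ a in 0..1, f (1 - a) :=
      intervalIntegral.integral_congr_Ioo_of_le zero_le_one fun a ha ↦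
        integral_integral_integral_chainArea_pow k ha.1 ha.2
    _ = ∫ v in 0..1, f v := by
      rw [intervalIntegral.integral_comp_sub_left, sub_self, sub_zero]
    _ = _ := by
      rw [intervalIntegral.integral_div, intervalIntegral.integral_add (hint (by fun_prop))
          (hint (by fun_prop)), intervalIntegral.integral_sub (hint (by fun_prop))
          (hint (by fun_prop)), intervalIntegral.integral_add (hint (by fun_prop))
          (hint (by fun_prop)), intervalIntegral.integral_sub (hint (by fun_prop))
          (hint (by fun_prop)), intervalIntegral.integral_const_mul,
        intervalIntegral.integral_sub (hint (by fun_prop)) (hint (by fun_prop)),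
        intervalIntegral.integral_div, integral_zero_one_sum_pow_add_two,
        integral_id, integral_zero_one_pow, integral_zero_one_pow]
      push_cast
      ring

end Moments

/-- `E[V_2^k] = 4(k-3)/((k+1)(k+2)(k+3)) + 8 H_{k+2}/((k+1)(k+2)^2)`. -/
theorem stmt9 (k : ℕ) :
    ∫ ω, (V 2 ω) ^ k ∂ P 2
      = 4 * ((k : ℝ) - 3) / (((k : ℝ) + 1) * ((k : ℝ) + 2) * ((k : ℝ) + 3))
        + 8 * H (k + 2) / (((k : ℝ) + 1) * ((k : ℝ) + 2) ^ 2) := by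
  rw [integral_V_two_pow_eq_iterated, iteratedIntegral_chainArea_pow, H_succ, H_succ]
  push_cast
  field_simp
  ring

end
end
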